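/- arXiv:math/0412124 — 3 statements merged into one kernel-verified Lean document; each statement's English description precedes it below -/
import Mathlib

section
/- For every graded poset P of rank at least 1, the ab-index of the Tchebyshev transform satisfies Ψ(T(P)) = T(Ψ(P)·a), where on the left T(P) is the Tchebyshev transform of the poset P and on the right T is the Tchebyshev transform on ab-polynomials. -/
open scoped TensorProduct

noncomputable section

namespace Tcheb

/-! ### The algebra `R⟨a,b⟩` of ab-polynomials -/

/-- Words in the two noncommuting letters `a` (encoded `true`) and `b` (encoded `false`). -/
abbrev ABWord : Type := FreeMonoid Bool

/-- The ring `R⟨a,b⟩` of polynomials in two noncommuting variables `a` and `b`. -/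
abbrev AB (R : Type) [CommRing R] : Type := MonoidAlgebra R ABWord

variable (R : Type) [CommRing R]

/-- The ab-monomial corresponding to a word. -/
def word (l : List Bool) : AB R := MonoidAlgebra.of R ABWord (FreeMonoid.ofList l)

/-- The variable `a`. -/
def av : AB R := word R [true]
/-- The variable `b`. -/
def bv : AB R := word R [false]
/-- `c = a + b`. -/
def cv : AB R := av R + bv R
/-- `d = ab + ba`. -/
def dv : AB R := av R * bv R + bv R * av R
/-- `a - b`. -/
def ev : AB R := av R - bv R

/-- The linear map defined by prescribing values on the basis of ab-monomials. -/
def onBasis {M : Type} [AddCommMonoid M] [Module R M] (f : List Bool → M) :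
    AB R →ₗ[R] M :=
  (Finsupp.lift M R ABWord fun w => f (FreeMonoid.toList w)) ∘ₗ
    (MonoidAlgebra.coeffLinearEquiv R).toLinearMap

/-- The algebra map `A` with `A(a) = 1`, `A(b) = 0`. -/
def Amap : AB R →ₐ[R] R :=
  MonoidAlgebra.lift R R ABWord (FreeMonoid.lift fun x => if x then (1 : R) else 0)

/-- The coproduct on `R⟨a,b⟩`: on an ab-monomial `u₁ ⋯ u_k` it is
`Σ_{i=1}^k u₁ ⋯ u_{i-1} ⊗ u_{i+1} ⋯ u_k`. -/
def Delta : AB R →ₗ[R] AB R ⊗[R] AB R :=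
  onBasis R fun w => ∑ i ∈ Finset.range w.length,
    word R (w.take i) ⊗ₜ[R] word R (w.drop (i + 1))

/-- The linear map `C(u) = 2·A(u) + Σ_u A(u₍₁₎)·A(u₍₂₎)`. -/
def Cmap : AB R →ₗ[R] R :=
  2 • (Amap R).toLinearMap +
    (LinearMap.mul' R R ∘ₗ
      TensorProduct.map (Amap R).toLinearMap (Amap R).toLinearMap) ∘ₗ Delta R

/-- `κ(u) = A(u)·(a-b)^(deg u)` on homogeneous `u`, extended linearly. -/
def kappa : AB R →ₗ[R] AB R :=
  onBasis R fun w => Amap R (word R w) • ev R ^ w.length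

/-- `ν(u) = C(u)·(a-b)^(deg u)` on homogeneous `u`, extended linearly. -/
def nuMap : AB R →ₗ[R] AB R :=
  onBasis R fun w => Cmap R (word R w) • ev R ^ w.length

end Tcheb

namespace Tcheb

/-- Cutting a word into the list of segments between the (sorted) cut positions. -/
def segments : List Bool → List ℕ → List (List Bool)
  | l, [] => [l]
  | l, i :: rest => l.take i :: segments (l.drop (i + 1)) (rest.map fun j => j - (i + 1))
  termination_by _ cuts => cuts.length
  decreasing_by simp

variable (R : Type) [CommRing R]

/-- For segments `[s₁, …, s_k]` this is `ν(s₁)·b·ν(s₂)·b ⋯ b·ν(s_{k-1})·b·κ(s_k)`. -/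
def chainProd : List (List Bool) → AB R
  | [] => 1
  | [s] => kappa R (word R s)
  | s :: rest => nuMap R (word R s) * bv R * chainProd rest

/-- The Tchebyshev transform (of the first kind) on ab-polynomials:
`T(u) = Σ_{k ≥ 1} Σ_u ν(u₍₁₎)·b·ν(u₍₂₎)·b ⋯ b·ν(u₍ₖ₋₁₎)·b·κ(u₍ₖ₎)`,
where the inner sum is over the `k`-fold coproduct.  On the ab-monomial basis this
is the sum, over all sets of positions of deleted letters, of the corresponding
products over the resulting segments. -/
def Tmap : AB R →ₗ[R] AB R :=
  onBasis R fun w => ∑ S : Finset (Fin w.length),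
    chainProd R (segments w ((S.sort (· ≤ ·)).map Fin.val))

/-- The `ω` map on a word: replace each occurrence of `ab` by `2d` and all
remaining letters by `c`. -/
def omegaWord : List Bool → AB R
  | [] => 1
  | true :: false :: rest => (2 * dv R) * omegaWord rest
  | _ :: rest => cv R * omegaWord rest

/-- The `ω` map of Billera–Ehrenborg–Readdy. -/
def omegaMap : AB R →ₗ[R] AB R := onBasis R fun w => omegaWord R w

/-- The reversal involution `u ↦ u*` of ab-polynomials. -/
def revMap : AB R →ₗ[R] AB R := onBasis R fun w => word R w.reverse

/-- `H*(1) = 0` and `H*(u·a) = H*(u·b) = u`. -/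
def Hstar : AB R →ₗ[R] AB R :=
  onBasis R fun w => if w = [] then 0 else word R w.dropLast

/-- The Tchebyshev transform of the second kind `U(u) = H*(T(u·a))`. -/
def Umap : AB R →ₗ[R] AB R := Hstar R ∘ₗ Tmap R ∘ₗ LinearMap.mulRight R (av R)

/-- `σ(u) = Σ_u κ(u₍₁₎)·b·T(u₍₂₎)`. -/
def sigmaMap : AB R →ₗ[R] AB R :=
  LinearMap.mul' R (AB R) ∘ₗ
    TensorProduct.map (LinearMap.mulRight R (bv R) ∘ₗ kappa R) (Tmap R) ∘ₗ Delta R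

/-! ### Graded posets and the ab-index -/

/-- `rk` is a rank function for a bounded poset: `rk ⊥ = 0` and covers raise rank by one. -/
def IsRankFun (α : Type) [PartialOrder α] [OrderBot α] (rk : α → ℕ) : Prop :=
  rk ⊥ = 0 ∧ ∀ x y : α, x ⋖ y → rk y = rk x + 1

/-- `f` lists the elements of a chain in increasing order with respect to the
strict order relation `lt`. -/
def IsStrictChain {α : Type} (lt : α → α → Prop) {n : ℕ} (f : Fin (n + 1) → α) : Prop :=
  ∀ i j : Fin (n + 1), i < j → lt (f i) (f j)

/-- The weight of a chain `x₀ < x₁ < ⋯ < x_k`: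
`(a-b)^{ρ(x₀,x₁)-1}·b·(a-b)^{ρ(x₁,x₂)-1}·b ⋯ b·(a-b)^{ρ(x_{k-1},x_k)-1}`. -/
def chainWt {α : Type} (rk : α → ℕ) {n : ℕ} (f : Fin (n + 1) → α) : AB R :=
  (List.intersperse (bv R)
    (List.ofFn fun i : Fin n => ev R ^ (rk (f i.succ) - rk (f i.castSucc) - 1))).prod

/-- The ab-index `Ψ` of the graded poset with strict order relation `lt`, rank
function `rk`, minimum `b` and maximum `t`: the sum of the weights of all chains
from `b` to `t`. -/
def PsiRel {α : Type} (lt : α → α → Prop) (rk : α → ℕ) (b t : α) : AB R :=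
  ∑ᶠ (n : ℕ), ∑ᶠ (f : Fin (n + 1) → α)
    (_ : IsStrictChain lt f ∧ f 0 = b ∧ f (Fin.last n) = t), chainWt R rk f

end Tcheb

namespace Tcheb

/-! ### The Tchebyshev transform of a graded poset -/

section TPoset

variable (α : Type) [PartialOrder α] [BoundedOrder α]

/-- The elements `[x,y]` of the Tchebyshev transform: intervals of `P ∪ {-1̂}`,
i.e. pairs `(x,y)` with `x ∈ P ∪ {-1̂}`, `y ∈ P` and `x < y`. -/
def TPel : Type := {p : WithBot α × α // p.1 < (p.2 : WithBot α)}

/-- The underlying set of the Tchebyshev transform `T(P)`: the intervals `[x,y]`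
together with a new maximum element (`none`). -/
def TP : Type := Option (TPel α)

/-- The cover relation of the Tchebyshev transform `T(P)`:
`[x,y] ⋖ [y,w]` and `[x,y] ⋖ [x,w]` whenever `y ⋖ w` in `P`, and `[x,1̂] ⋖ 1̂_{T(P)}`. -/
inductive TPcov : TP α → TP α → Prop
  | up {x : WithBot α} {y w : α} (h1 : x < (y : WithBot α))
      (h2 : (y : WithBot α) < (w : WithBot α)) (hc : y ⋖ w) :
      TPcov (some ⟨(x, y), h1⟩) (some ⟨((y : WithBot α), w), h2⟩)
  | same {x : WithBot α} {y w : α} (h1 : x < (y : WithBot α))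
      (h2 : x < (w : WithBot α)) (hc : y ⋖ w) :
      TPcov (some ⟨(x, y), h1⟩) (some ⟨(x, w), h2⟩)
  | top {x : WithBot α} (h1 : x < ((⊤ : α) : WithBot α)) :
      TPcov (some ⟨(x, (⊤ : α)), h1⟩) none

/-- The strict order relation of `T(P)`, generated by the cover relation. -/
def TPlt : TP α → TP α → Prop := Relation.TransGen (TPcov α)

/-- The order relation of `T(P)`, generated by the cover relation. -/
def TPle : TP α → TP α → Prop := Relation.ReflTransGen (TPcov α)

/-- The minimum element `[-1̂, 0̂]` of `T(P)`. -/
def TPbot : TP α := some ⟨((⊥ : WithBot α), (⊥ : α)), WithBot.bot_lt_coe _⟩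

/-- The maximum element `1̂_{T(P)}` of `T(P)`. -/
def TPtop : TP α := none

/-- The rank function of `T(P)`: `ρ([x,y]) = ρ(y)` and `ρ(1̂_{T(P)}) = ρ(P) + 1`. -/
def TPrk (rk : α → ℕ) : TP α → ℕ
  | some p => rk p.1.2
  | none => rk (⊤ : α) + 1

theorem TPbot_ne_TPtop : TPbot α ≠ TPtop α := by exact Option.some_ne_none _

/-- The map `z : T(P) → P ∪ {2̂}` with `z([x,y]) = y` and `z(1̂_{T(P)}) = 2̂`. -/
def zmap : TP α → WithTop α
  | some p => (p.1.2 : WithTop α)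
  | none => ⊤

/-- The number of elements of the interval `[u,v]` of `P`, for `u, v ∈ P ∪ {2̂}`. -/
def intervalCard (u v : WithTop α) : ℕ :=
  Set.ncard {t : α | u ≤ (t : WithTop α) ∧ (t : WithTop α) ≤ v}

end TPoset

/-! ### The dual diamond product -/

/-- The strict order relation of the dual diamond product
`P ◇* Q = ((P ∖ {1̂}) × (Q ∖ {1̂})) ∪ {1̂}` (with `none` the new maximum), built from
the order relations `leA, ltA` and `leB, ltB` of the two factors. -/
def dsLT {A B : Type} (leA ltA : A → A → Prop) (leB ltB : B → B → Prop) :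
    Option (A × B) → Option (A × B) → Prop
  | some p, some q => (leA p.1 q.1 ∧ leB p.2 q.2) ∧ (ltA p.1 q.1 ∨ ltB p.2 q.2)
  | some _, none => True
  | none, _ => False

/-! ### EL-labelings -/

/-- The list of edge labels along a chain (given as a list of poset elements). -/
def labelsList {α Λ : Type} (lam : α → α → Λ) (l : List α) : List Λ :=
  (l.zip l.tail).map fun p => lam p.1 p.2

/-- `l` is a maximal (saturated) chain of the interval `[x,y]` with respect to the
cover relation `cov`: it runs from `x` to `y` and every step is a cover. -/
def IsMaxChainList {α : Type} (cov : α → α → Prop) (x y : α) (l : List α) : Prop :=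
  l.head? = some x ∧ l.getLast? = some y ∧ l.Chain' cov

/-- An `EL`-labeling of the poset whose cover relation is `cov`, with labels in the
linearly ordered set `(Λ, lle, llt)`: every interval has a unique rising maximal
chain, which moreover is lexicographically least among all maximal chains of the
interval. -/
def IsELLabeling (α Λ : Type) (lle llt : Λ → Λ → Prop)
    (cov : α → α → Prop) (lam : α → α → Λ) : Prop :=
  ∀ x y : α, Relation.ReflTransGen cov x y →
    ∃ l : List α, (IsMaxChainList cov x y l ∧ (labelsList lam l).Chain' lle) ∧
      (∀ l' : List α, IsMaxChainList cov x y l' →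
        (labelsList lam l').Chain' lle → l' = l) ∧
      (∀ l' : List α, IsMaxChainList cov x y l' →
        labelsList lam l = labelsList lam l' ∨
          List.Lex llt (labelsList lam l) (labelsList lam l'))

/-! ### Eulerian posets -/

/-- A graded poset is Eulerian if every nontrivial interval `[x,y]` has the
same number of elements of even rank as of odd rank. -/
def IsEulerian (α : Type) [PartialOrder α] (rk : α → ℕ) : Prop :=
  ∀ x y : α, x < y →
    Set.ncard {z : α | x ≤ z ∧ z ≤ y ∧ Even (rk z)} =
      Set.ncard {z : α | x ≤ z ∧ z ≤ y ∧ ¬ Even (rk z)}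

/-! ### The face lattice of the crosspolytope -/

/-- A face of the `n`-dimensional crosspolytope: a partial sign vector, i.e. the
pair `(S, ε)` of a subset `S ⊆ {1,…,n}` (the set of coordinates where the function
takes a value `some`) together with a sign function `ε` on `S`. -/
def CrossEl (n : ℕ) : Type := Fin n → Option Bool

/-- `(S,ε) ≤ (T,δ)` iff `S ⊆ T` and `δ` restricted to `S` is `ε`. -/
instance (n : ℕ) : PartialOrder (CrossEl n) where
  le f g := ∀ i s, f i = some s → g i = some s
  le_refl f i s h := h
  le_trans f g h fg gh i s hi := gh i s (fg i s hi)
  le_antisymm f g fg gf := by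
    funext i
    cases hf : f i with
    | some s => exact (fg i s hf).symm
    | none =>
      cases hg : g i with
      | some s => exact absurd (gf i s hg) (by simp [hf])
      | none => rfl

/-- The face lattice of the `n`-dimensional crosspolytope: all partial sign
vectors together with a new maximum element. -/
abbrev Cross (n : ℕ) : Type := WithTop (CrossEl n)

/-- The rank function of the face lattice of the crosspolytope:
`ρ(S,ε) = |S|` and the maximum has rank `n + 1`. -/
def crossRk (n : ℕ) : Cross n → ℕ
  | none => n + 1
  | some f => (Finset.univ.filter fun i : Fin n => (f i).isSome).card

/-- The minimal element (the empty face) of the crosspolytope face lattice. -/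
def crossBot (n : ℕ) : Cross n := WithTop.some (fun _ => none)

/-- The maximal element of the crosspolytope face lattice. -/
def crossTop (n : ℕ) : Cross n := ⊤

/-! ### Quasisymmetric functions -/

/-- The monomial quasisymmetric function `M_{(p₁,…,p_k)}`, as a formal power
series in the countably many commuting variables `t₁, t₂, …` (indexed by `ℕ`). -/
def MQ (R : Type) [CommRing R] (ps : List ℕ) : MvPowerSeries ℕ R :=
  fun m => if ((m.support.sort (· ≤ ·)).map fun i => m i) = ps then 1 else 0

/-- The `t`-part of a monomial in the variables `s` (index `none`) and
`t₁, t₂, …` (indices `some i`). -/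
def tpart (m : Option ℕ →₀ ℕ) : ℕ →₀ ℕ :=
  Finsupp.comapDomain some m (Option.some_injective ℕ).injOn

/-- The type B monomial quasisymmetric function `s^p · M_{(p₁,…,p_k)}`, a formal
power series in the variables `s` (index `none`) and `t₁, t₂, …` (indices `some i`). -/
def MB (R : Type) [CommRing R] (p : ℕ) (ps : List ℕ) : MvPowerSeries (Option ℕ) R :=
  fun m => if m none = p ∧
      (((tpart m).support.sort (· ≤ ·)).map fun i => tpart m i) = ps then 1 else 0

/-- The quasisymmetric function `F(P)` of the graded poset with strict order
relation `lt`, rank function `rk`, minimum `b` and maximum `t`: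
`F(P) = Σ_c M_{(ρ(x₀,x₁),…,ρ(x_{k-1},x_k))}` over all chains `c` from `b` to `t`. -/
def FQ (R : Type) [CommRing R] {α : Type} (lt : α → α → Prop) (rk : α → ℕ)
    (b t : α) : MvPowerSeries ℕ R :=
  ∑ᶠ (n : ℕ), ∑ᶠ (f : Fin (n + 1) → α)
    (_ : IsStrictChain lt f ∧ f 0 = b ∧ f (Fin.last n) = t),
    MQ R (List.ofFn fun i : Fin n => rk (f i.succ) - rk (f i.castSucc))

/-- The type B quasisymmetric function `F_B(P) = Σ_{0̂ < x ≤ 1̂} s^{ρ(x)-1}·F([x,1̂])`,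
written as a sum over all chains `0̂ < x₀ < x₁ < ⋯ < x_k = 1̂` of
`s^{ρ(x₀)-1}·M_{(ρ(x₀,x₁),…,ρ(x_{k-1},x_k))}`. -/
def FB (R : Type) [CommRing R] {α : Type} (lt : α → α → Prop) (rk : α → ℕ)
    (b t : α) : MvPowerSeries (Option ℕ) R :=
  ∑ᶠ (n : ℕ), ∑ᶠ (f : Fin (n + 1) → α)
    (_ : IsStrictChain lt f ∧ lt b (f 0) ∧ f (Fin.last n) = t),
    MB R (rk (f 0) - 1) (List.ofFn fun i : Fin n => rk (f i.succ) - rk (f i.castSucc))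

/-! ### Characters and the chain maps -/

/-- A character on `k⟨a,b⟩`: a linear functional which is multiplicative with
respect to Cartesian products of graded posets (of rank at least 1). -/
def IsCharacter (k : Type) [Field k] (G : AB k →ₗ[k] k) : Prop :=
  ∀ (α β : Type) [Fintype α] [Fintype β] [PartialOrder α] [PartialOrder β]
    [BoundedOrder α] [BoundedOrder β], ∀ (rkα : α → ℕ) (rkβ : β → ℕ),
    IsRankFun α rkα → IsRankFun β rkβ → 1 ≤ rkα ⊤ → 1 ≤ rkβ ⊤ →
    G (PsiRel k (· < ·) (fun p : α × β => rkα p.1 + rkβ p.2)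
        ((⊥ : α), (⊥ : β)) ((⊤ : α), (⊤ : β))) =
      G (PsiRel k (· < ·) rkα ⊥ ⊤) * G (PsiRel k (· < ·) rkβ ⊥ ⊤)

/-- The quasisymmetric function image `g̃F(P)` of the chain map of the second kind:
`Σ_c G(Ψ([x₀,x₁])) ⋯ G(Ψ([x_{k-1},x_k])) · M_{(ρ(x₀,x₁),…,ρ(x_{k-1},x_k))}`,
summed over all chains `c = {b = x₀ < ⋯ < x_k = t}`. -/
def gtF (k : Type) [Field k] (G : AB k →ₗ[k] k) {α : Type} (lt : α → α → Prop)
    (rk : α → ℕ) (b t : α) : MvPowerSeries ℕ k :=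
  ∑ᶠ (n : ℕ), ∑ᶠ (f : Fin (n + 1) → α)
    (_ : IsStrictChain lt f ∧ f 0 = b ∧ f (Fin.last n) = t),
    (∏ i : Fin n, G (PsiRel k lt rk (f i.castSucc) (f i.succ))) •
      MQ k (List.ofFn fun i : Fin n => rk (f i.succ) - rk (f i.castSucc))

/-- The type B quasisymmetric function image `gF_B(P) = Σ_{0̂ < x ≤ 1̂}
s^{ρ(x)-1}·g̃F([x,1̂])` of the chain map of the first kind, written as a sum over
all chains `0̂ < x₀ < ⋯ < x_k = 1̂`. -/
def gFB (k : Type) [Field k] (G : AB k →ₗ[k] k) {α : Type} (lt : α → α → Prop)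
    (rk : α → ℕ) (b t : α) : MvPowerSeries (Option ℕ) k :=
  ∑ᶠ (n : ℕ), ∑ᶠ (f : Fin (n + 1) → α)
    (_ : IsStrictChain lt f ∧ lt b (f 0) ∧ f (Fin.last n) = t),
    (∏ i : Fin n, G (PsiRel k lt rk (f i.castSucc) (f i.succ))) •
      MB k (rk (f 0) - 1) (List.ofFn fun i : Fin n => rk (f i.succ) - rk (f i.castSucc))

/-- The space of homogeneous ab-polynomials of degree `n`. -/
def ABhomog (k : Type) [Field k] (n : ℕ) : Submodule k (AB k) :=
  Submodule.span k {x : AB k | ∃ w : List Bool, w.length = n ∧ x = word k w}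

/-! ### Helper lemmas: algebra -/

theorem onBasis_word {M : Type} [AddCommMonoid M] [Module ℤ M] (f : List Bool → M) (l : List Bool) :
    onBasis ℤ f (word ℤ l) = f l := by
  simp [onBasis, word]

theorem word_append (l l' : List Bool) : word ℤ (l ++ l') = word ℤ l * word ℤ l' := by
  simp [word]

theorem word_nil : word ℤ [] = 1 := by
  simp [word, MonoidAlgebra.one_def]

theorem ab_induction {motive : AB ℤ → Prop} (u : AB ℤ) (hz : motive 0)
    (hadd : ∀ u v, motive u → motive v → motive (u + v))
    (hsmul : ∀ (n : ℤ) u, motive u → motive (n • u))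
    (hw : ∀ l, motive (word ℤ l)) : motive u := by
  refine MonoidAlgebra.induction_linear u hz hadd ?_
  intro r n
  have h := hsmul n _ (hw (FreeMonoid.toList r))
  simpa [word] using h

theorem Amap_av : Amap ℤ (av ℤ) = 1 := by
  simp [Amap, av, word]

theorem Amap_bv : Amap ℤ (bv ℤ) = 0 := by
  simp [Amap, bv, word]

theorem Delta_cons (x : Bool) (l : List Bool) :
    Delta ℤ (word ℤ (x :: l)) =
      1 ⊗ₜ[ℤ] word ℤ l + (word ℤ [x] ⊗ₜ[ℤ] (1 : AB ℤ)) * Delta ℤ (word ℤ l) := by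
  rw [Delta, onBasis_word, onBasis_word, List.length_cons, Finset.sum_range_succ', add_comm,
    Finset.mul_sum]
  refine congrArg₂ (· + ·) ?_ ?_
  · simp [word_nil]
  · refine Finset.sum_congr rfl fun i _ => ?_
    rw [List.take_succ_cons, List.drop_succ_cons, Algebra.TensorProduct.tmul_mul_tmul, one_mul,
      ← word_append]
    rfl

theorem Delta_nil : Delta ℤ (word ℤ []) = 0 := by
  simp [Delta, onBasis_word]

theorem Delta_mul (u v : AB ℤ) :
    Delta ℤ (u * v) = Delta ℤ u * ((1 : AB ℤ) ⊗ₜ[ℤ] v) + (u ⊗ₜ[ℤ] (1 : AB ℤ)) * Delta ℤ v := by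
  induction u using ab_induction with
  | hz => simp
  | hadd u u' h h' => 
    rw [add_mul, map_add, h, h', map_add, TensorProduct.add_tmul, add_mul, add_mul]; abel
  | hsmul n u h => 
    rw [smul_mul_assoc, map_smul, h, map_smul, ← TensorProduct.smul_tmul', smul_mul_assoc,
      smul_mul_assoc, smul_add]
  | hw l =>
    induction l with
    | nil => rw [Delta_nil, word_nil, ← Algebra.TensorProduct.one_def]; simp
    | cons x l ih =>
      have key : ∀ w : AB ℤ, Delta ℤ (word ℤ [x] * w) =
          1 ⊗ₜ[ℤ] w + (word ℤ [x] ⊗ₜ[ℤ] (1 : AB ℤ)) * Delta ℤ w := by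
        intro w
        induction w using ab_induction with
        | hz => simp
        | hadd u u' h h' =>
          rw [mul_add, map_add, h, h', map_add, TensorProduct.tmul_add, mul_add]; abel
        | hsmul n u h =>
          rw [mul_smul_comm, map_smul, h, map_smul, TensorProduct.tmul_smul, mul_smul_comm,
            smul_add]
        | hw l => rw [← word_append]; exact Delta_cons x l
      have e : word ℤ (x :: l) = word ℤ [x] * word ℤ l := by rw [← word_append]; rfl
      rw [e, mul_assoc, key, key, ih, add_mul, mul_add, Algebra.TensorProduct.tmul_mul_tmul,
        one_mul, ← mul_assoc, ← mul_assoc, Algebra.TensorProduct.tmul_mul_tmul, one_mul, add_assoc]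

theorem Delta_one : Delta ℤ 1 = 0 := by rw [← word_nil, Delta_nil]

theorem Delta_letter (x : Bool) : Delta ℤ (word ℤ [x]) = 1 ⊗ₜ[ℤ] 1 := by
  rw [Delta_cons, Delta_nil, word_nil]; simp

theorem Delta_ev : Delta ℤ (ev ℤ) = 0 := by
  rw [ev, av, bv, map_sub, Delta_letter, Delta_letter, sub_self]

theorem Delta_ev_pow (k : ℕ) : Delta ℤ (ev ℤ ^ k) = 0 := by
  induction k with
  | zero => rw [pow_zero, Delta_one]
  | succ k ih => rw [pow_succ, Delta_mul, ih, Delta_ev]; simp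

theorem Delta_ev_pow_mul (k : ℕ) (u : AB ℤ) : Delta ℤ (ev ℤ ^ k * bv ℤ * u) =
    (ev ℤ ^ k) ⊗ₜ[ℤ] u + ((ev ℤ ^ k * bv ℤ) ⊗ₜ[ℤ] (1 : AB ℤ)) * Delta ℤ u := by
  rw [Delta_mul, Delta_mul, Delta_ev_pow, bv, Delta_letter]
  simp [Algebra.TensorProduct.tmul_mul_tmul]

theorem Delta_mul_av (u : AB ℤ) : Delta ℤ (u * av ℤ) =
    Delta ℤ u * ((1 : AB ℤ) ⊗ₜ[ℤ] av ℤ) + u ⊗ₜ[ℤ] (1 : AB ℤ) := by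
  rw [Delta_mul, av, Delta_letter]
  simp [Algebra.TensorProduct.tmul_mul_tmul]

theorem kappa_word (l : List Bool) :
    kappa ℤ (word ℤ l) = Amap ℤ (word ℤ l) • ev ℤ ^ l.length := onBasis_word _ _

theorem kappa_mul (u v : AB ℤ) : kappa ℤ (u * v) = kappa ℤ u * kappa ℤ v := by
  induction u using ab_induction with
  | hz => simp
  | hadd u u' h h' => rw [add_mul, map_add, h, h', map_add, add_mul]
  | hsmul n u h => rw [smul_mul_assoc, map_smul, h, map_smul, smul_mul_assoc]
  | hw l =>
    induction v using ab_induction with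
    | hz => simp
    | hadd u u' h h' => rw [mul_add, map_add, h, h', map_add, mul_add]
    | hsmul n u h => rw [mul_smul_comm, map_smul, h, map_smul, mul_smul_comm]
    | hw l' =>
      rw [← word_append, kappa_word, kappa_word, kappa_word, word_append, map_mul,
        smul_mul_smul_comm, List.length_append, pow_add]

theorem kappa_one : kappa ℤ 1 = 1 := by
  rw [← word_nil, kappa_word, word_nil]; simp

theorem kappa_av : kappa ℤ (av ℤ) = ev ℤ := by
  rw [av, kappa_word, ← av, Amap_av]; simp

theorem kappa_bv : kappa ℤ (bv ℤ) = 0 := by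
  rw [bv, kappa_word, ← bv, Amap_bv]; simp

theorem kappa_ev : kappa ℤ (ev ℤ) = ev ℤ := by
  conv_lhs => rw [ev]
  rw [map_sub, kappa_av, kappa_bv, sub_zero]

theorem kappa_ev_pow (k : ℕ) : kappa ℤ (ev ℤ ^ k) = ev ℤ ^ k := by
  induction k with
  | zero => rw [pow_zero, kappa_one]
  | succ k ih => rw [pow_succ, kappa_mul, ih, kappa_ev]

/-- The bilinear-type map used to express `ν` through `κ`. -/
def nuAux : AB ℤ ⊗[ℤ] AB ℤ →ₗ[ℤ] AB ℤ :=
  LinearMap.mul' ℤ (AB ℤ) ∘ₗ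
    TensorProduct.map (LinearMap.mulRight ℤ (ev ℤ) ∘ₗ kappa ℤ) (kappa ℤ)

theorem nuAux_tmul (u v : AB ℤ) : nuAux (u ⊗ₜ v) = kappa ℤ u * ev ℤ * kappa ℤ v := by
  rfl

/-- The bilinear-type map appearing in the recursion for `T`. -/
def tAux : AB ℤ ⊗[ℤ] AB ℤ →ₗ[ℤ] AB ℤ :=
  LinearMap.mul' ℤ (AB ℤ) ∘ₗ
    TensorProduct.map (LinearMap.mulRight ℤ (bv ℤ) ∘ₗ nuMap ℤ) (Tmap ℤ)

theorem tAux_tmul (u v : AB ℤ) : tAux (u ⊗ₜ v) = nuMap ℤ u * bv ℤ * Tmap ℤ v := by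
  rfl

theorem Delta_word (l : List Bool) : Delta ℤ (word ℤ l) = ∑ i ∈ Finset.range l.length,
    word ℤ (l.take i) ⊗ₜ[ℤ] word ℤ (l.drop (i + 1)) := onBasis_word _ _

theorem nuMap_eq (u : AB ℤ) : nuMap ℤ u = (2 : ℤ) • kappa ℤ u + nuAux (Delta ℤ u) := by
  induction u using ab_induction with
  | hz => simp
  | hadd u u' h h' => simp only [map_add, h, h', smul_add]; abel
  | hsmul n u h => rw [map_smul, h, map_smul, map_smul, map_smul, smul_add, smul_comm]
  | hw l =>
    rw [nuMap, onBasis_word, Cmap, kappa_word, Delta_word, map_sum, LinearMap.add_apply, add_smul]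
    congr 1
    · rw [← smul_assoc]; rfl
    · rw [LinearMap.comp_apply, Delta_word, map_sum, Finset.sum_smul]
      refine Finset.sum_congr rfl fun i hi => ?_
      rw [Finset.mem_range] at hi
      rw [nuAux_tmul, kappa_word, kappa_word, smul_mul_assoc, smul_mul_smul_comm, ← pow_succ,
        ← pow_add, LinearMap.comp_apply, TensorProduct.map_tmul, LinearMap.mul'_apply]
      congr 2
      rw [List.length_take, List.length_drop]
      omega

/-- Prepend a word to the first segment. -/
def prependHead (p : List Bool) : List (List Bool) → List (List Bool)
  | [] => []
  | s :: rest => (p ++ s) :: rest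

theorem segments_succ (x : Bool) (w : List Bool) (c : List ℕ) :
    segments (x :: w) (c.map (· + 1)) = prependHead [x] (segments w c) := by
  cases c with
  | nil => simp [segments, prependHead]
  | cons i rest =>
    simp only [List.map_cons, segments, prependHead, List.take_succ_cons, List.drop_succ_cons,
      List.map_map, List.singleton_append]
    congr 3
    funext j
    simp

theorem segments_zero (x : Bool) (w : List Bool) (c : List ℕ) :
    segments (x :: w) (0 :: c.map (· + 1)) = [] :: segments w c := by
  simp [segments, Function.comp_def]

theorem prependHead_prependHead (p q : List Bool) (L : List (List Bool)) :
    prependHead p (prependHead q L) = prependHead (p ++ q) L := by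
  cases L <;> simp [prependHead]

theorem sum_finset_fin_succ {M : Type} [AddCommMonoid M] (n : ℕ) (F : List ℕ → M) :
    ∑ S : Finset (Fin (n + 1)), F ((S.sort (· ≤ ·)).map Fin.val) =
      ∑ S : Finset (Fin n), F (((S.sort (· ≤ ·)).map Fin.val).map (· + 1)) +
      ∑ S : Finset (Fin n), F (0 :: ((S.sort (· ≤ ·)).map Fin.val).map (· + 1)) := by
  classical
  have h0 : (0 : Fin (n + 1)) ∉ Finset.univ.image (Fin.succ : Fin n → Fin (n + 1)) := by
    simp
  have hu : (Finset.univ : Finset (Finset (Fin (n + 1)))) =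
      (insert 0 (Finset.univ.image (Fin.succ : Fin n → Fin (n + 1)))).powerset := by
    ext S
    simp only [Finset.mem_univ, Finset.mem_powerset, true_iff]
    intro i _
    rcases Fin.eq_zero_or_eq_succ i with h | ⟨j, h⟩ <;> simp [h]
  have hs : ∀ S : Finset (Fin n), ((S.image Fin.succ).sort (· ≤ ·)) =
      (S.sort (· ≤ ·)).map Fin.succ := by
    intro S
    have := (StrictMonoOn.map_finsetSort (Fin.succEmb n) S
      ((Fin.strictMono_succ).strictMonoOn _)).symm
    rw [Finset.map_eq_image] at this
    exact this
  rw [hu, Finset.sum_powerset_insert h0, Finset.powerset_image]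
  have hinj : Function.Injective (fun S : Finset (Fin n) => S.image (Fin.succ)) :=
    Finset.image_injective (Fin.succ_injective n)
  rw [Finset.sum_image hinj.injOn, Finset.sum_image hinj.injOn, Finset.powerset_univ]
  congr 1
  · refine Finset.sum_congr rfl fun S _ => ?_
    rw [hs]; simp [Function.comp_def]
  · refine Finset.sum_congr rfl fun S _ => ?_
    rw [Finset.sort_insert, hs]
    · simp [Function.comp_def]
    · simp
    · simp

theorem segments_ne_nil (w : List Bool) (c : List ℕ) : segments w c ≠ [] := by
  cases c <;> simp [segments]

theorem chainProd_cons (s : List Bool) (L : List (List Bool)) (h : L ≠ []) :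
    chainProd ℤ (s :: L) = nuMap ℤ (word ℤ s) * bv ℤ * chainProd ℤ L := by
  cases L with
  | nil => exact absurd rfl h
  | cons a L => rw [chainProd]; simp

theorem Tmap_word (l : List Bool) : Tmap ℤ (word ℤ l) = ∑ S : Finset (Fin l.length),
    chainProd ℤ (segments l ((S.sort (· ≤ ·)).map Fin.val)) := onBasis_word _ _

theorem prependHead_nil (L : List (List Bool)) : prependHead [] L = L := by
  cases L <;> simp [prependHead]

theorem Tmap_aux (w : List Bool) : ∀ p : List Bool,
    ∑ S : Finset (Fin w.length),
      chainProd ℤ (prependHead p (segments w ((S.sort (· ≤ ·)).map Fin.val))) =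
    kappa ℤ (word ℤ (p ++ w)) + ∑ i ∈ Finset.range w.length,
      nuMap ℤ (word ℤ (p ++ w.take i)) * bv ℤ * Tmap ℤ (word ℤ (w.drop (i + 1))) := by
  induction w with
  | nil =>
    intro p
    change ∑ S : Finset (Fin 0), chainProd ℤ (prependHead p
      (segments [] ((S.sort (· ≤ ·)).map Fin.val))) = _
    have hS : (default : Finset (Fin 0)) = ∅ := Subsingleton.elim _ _
    rw [Fintype.sum_unique, hS, Finset.sort_empty]
    simp [segments, prependHead, chainProd]
  | cons x w ih =>
    intro p
    rw [List.length_cons,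
      sum_finset_fin_succ w.length (fun c => chainProd ℤ (prependHead p (segments (x :: w) c)))]
    simp only [segments_succ, segments_zero, prependHead_prependHead]
    rw [ih, Finset.sum_range_succ']
    simp only [prependHead]
    simp only [chainProd_cons _ _ (segments_ne_nil _ _)]
    rw [← Finset.mul_sum, ← Tmap_word]
    simp [add_assoc]

theorem Tmap_eq (u : AB ℤ) : Tmap ℤ u = kappa ℤ u + tAux (Delta ℤ u) := by
  induction u using ab_induction with
  | hz => simp
  | hadd u u' h h' => simp only [map_add, h, h']; abel
  | hsmul n u h => rw [map_smul, h, map_smul, map_smul, map_smul, smul_add]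
  | hw l =>
    have := Tmap_aux l []
    simp only [prependHead_nil, List.nil_append] at this
    rw [Tmap_word, this, Delta_word, map_sum]
    simp only [tAux_tmul]

/-! ### Helper lemmas: chains -/

section Chains

open Classical in
/-- Sum of weights of chains with `n + 1` elements. -/
def NCh {β : Type} [Fintype β] (lt : β → β → Prop) (rk : β → ℕ) (n : ℕ) (b t : β) : AB ℤ :=
  ∑ f : Fin (n + 1) → β,
    if IsStrictChain lt f ∧ f 0 = b ∧ f (Fin.last n) = t then chainWt ℤ rk f else 0

variable {β : Type} [Fintype β] {lt : β → β → Prop} {rk : β → ℕ}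

theorem NCh_eq (n : ℕ) (b t : β) : NCh lt rk n b t =
    ∑ᶠ (f : Fin (n + 1) → β)
    (_ : IsStrictChain lt f ∧ f 0 = b ∧ f (Fin.last n) = t), chainWt ℤ rk f := by
  classical
  rw [finsum_eq_sum_of_fintype, NCh]
  refine Finset.sum_congr rfl fun f _ => ?_
  rw [finsum_eq_if]

theorem NCh_eq_zero (hirr : ∀ x, ¬ lt x x) (n : ℕ) (hn : Fintype.card β ≤ n) (b t : β) :
    NCh lt rk n b t = 0 := by
  classical
  refine Finset.sum_eq_zero fun f _ => if_neg ?_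
  rintro ⟨h, -, -⟩
  have hinj : Function.Injective f := by
    intro i j hij
    rcases lt_trichotomy i j with h' | h' | h'
    · exact absurd (hij ▸ h i j h') (hirr _)
    · exact h'
    · exact absurd (hij ▸ h j i h') (hirr _)
  have := Fintype.card_le_of_injective f hinj
  simp at this
  omega

theorem PsiRel_eq_sum (hirr : ∀ x, ¬ lt x x) (K : ℕ) (hK : Fintype.card β ≤ K) (b t : β) :
    PsiRel ℤ lt rk b t = ∑ n ∈ Finset.range K, NCh lt rk n b t := by
  rw [PsiRel]
  simp only [← NCh_eq]
  refine finsum_eq_sum_of_support_subset _ ?_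
  intro n hn
  rw [Function.mem_support] at hn
  by_contra hc
  simp at hc
  exact hn (NCh_eq_zero hirr n (hK.trans hc) b t)

theorem NCh_zero (b t : β) (h : b ≠ t) : NCh lt rk 0 b t = 0 := by
  classical
  refine Finset.sum_eq_zero fun f _ => if_neg ?_
  rintro ⟨-, h1, h2⟩
  exact h (h1.symm.trans h2)

theorem strictChain_cons (htr : ∀ x y z, lt x y → lt y z → lt x z) (n : ℕ) (x : β)
    (g : Fin (n + 1) → β) :
    IsStrictChain lt (Fin.cons x g : Fin (n + 2) → β) ↔ lt x (g 0) ∧ IsStrictChain lt g := by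
  constructor
  · intro h
    refine ⟨h 0 1 (by simp), fun i j hij => ?_⟩
    have := h i.succ j.succ (by simpa using hij)
    simpa using this
  · rintro ⟨h0, h⟩ i j hij
    obtain ⟨j, rfl⟩ := Fin.exists_succ_eq.2 (Fin.ne_zero_of_lt hij)
    rcases Fin.eq_zero_or_eq_succ i with rfl | ⟨i, rfl⟩
    · simp only [Fin.cons_zero, Fin.cons_succ]
      rcases Fin.eq_zero_or_eq_succ j with rfl | ⟨k, hk⟩
      · exact h0
      · refine htr _ _ _ h0 (h 0 j ?_)
        exact Fin.pos_of_ne_zero (by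
          rintro rfl
          simp [Fin.ext_iff] at hk)
    · simpa using h i j (by simpa using hij)

theorem chainWt_cons (n : ℕ) (x : β) (g : Fin (n + 2) → β) :
    chainWt ℤ rk (Fin.cons x g : Fin (n + 3) → β) =
      ev ℤ ^ (rk (g 0) - rk x - 1) * bv ℤ * chainWt ℤ rk g := by
  rw [chainWt, chainWt, List.ofFn_succ, List.ofFn_succ]
  conv_rhs => rw [List.ofFn_succ]
  have h2 : (Fin.cons x g : Fin (n + 3) → β) 2 = g 1 := rfl
  simp [List.intersperse, mul_assoc, h2]

theorem chainWt_one (f : Fin 2 → β) :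
    chainWt ℤ rk f = ev ℤ ^ (rk (f 1) - rk (f 0) - 1) := by
  simp [chainWt]

open Classical in
theorem NCh_one (b t : β) :
    NCh lt rk 1 b t = if lt b t then ev ℤ ^ (rk t - rk b - 1) else 0 := by
  rw [NCh, Finset.sum_eq_single (![b, t] : Fin 2 → β)]
  · have : IsStrictChain lt (![b, t] : Fin 2 → β) ↔ lt b t := by
      constructor
      · intro h
        simpa using h 0 1 (by simp)
      · intro h i j hij
        fin_cases i <;> fin_cases j <;> simp_all
    rw [chainWt_one]
    simp [this]
  · intro f _ hf
    refine if_neg ?_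
    rintro ⟨-, h1, h2⟩
    apply hf
    funext i
    fin_cases i
    · exact h1
    · exact h2
  · simp

open Classical in
theorem NCh_succ (htr : ∀ x y z, lt x y → lt y z → lt x z) (n : ℕ) (b t : β) :
    NCh lt rk (n + 2) b t = ∑ z, if lt b z ∧ lt z t then
      ev ℤ ^ (rk z - rk b - 1) * bv ℤ * NCh lt rk (n + 1) z t else 0 := by
  have hL : NCh lt rk (n + 2) b t = ∑ g : Fin (n + 2) → β,
      if lt b (g 0) ∧ IsStrictChain lt g ∧ g (Fin.last _) = t then
        ev ℤ ^ (rk (g 0) - rk b - 1) * bv ℤ * chainWt ℤ rk g else 0 := by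
    rw [NCh, ← (Fin.consEquiv (fun _ : Fin (n + 3) => β)).sum_comp, Fintype.sum_prod_type,
      Finset.sum_eq_single b]
    · refine Finset.sum_congr rfl fun g _ => ?_
      change (if IsStrictChain lt (Fin.cons b g : Fin (n + 3) → β) ∧
        (Fin.cons b g : Fin (n + 3) → β) 0 = b ∧
        (Fin.cons b g : Fin (n + 3) → β) (Fin.last (n + 2)) = t then
        chainWt ℤ rk (Fin.cons b g : Fin (n + 3) → β) else 0) = _
      rw [chainWt_cons]
      simp only [strictChain_cons htr, ← Fin.succ_last, Fin.cons_zero, Fin.cons_succ, true_and,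
        and_assoc]
    · intro x _ hx
      refine Finset.sum_eq_zero fun g _ => if_neg ?_
      rintro ⟨-, h, -⟩
      exact hx (by simpa using h)
    · simp
  rw [hL]
  have hR : ∀ z, (if lt b z ∧ lt z t then
      ev ℤ ^ (rk z - rk b - 1) * bv ℤ * NCh lt rk (n + 1) z t else 0) =
      ∑ g : Fin (n + 2) → β, if g 0 = z then
      (if lt b (g 0) ∧ IsStrictChain lt g ∧ g (Fin.last _) = t then
        ev ℤ ^ (rk (g 0) - rk b - 1) * bv ℤ * chainWt ℤ rk g else 0) else 0 := by
    intro z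
    split_ifs with hz
    · rw [NCh, Finset.mul_sum]
      refine Finset.sum_congr rfl fun g _ => ?_
      by_cases h0 : g 0 = z
      · subst h0
        simp [hz.1]
      · simp [h0]
    · symm
      refine Finset.sum_eq_zero fun g _ => ?_
      split_ifs with h0 hg
      · exfalso
        apply hz
        subst h0
        refine ⟨hg.1, ?_⟩
        rw [← hg.2.2]
        exact hg.2.1 _ _ (by simp [Fin.lt_def])
      · rfl
      · rfl
  simp only [hR]
  rw [Finset.sum_comm]
  refine Finset.sum_congr rfl fun g _ => ?_
  simp

open Classical in
theorem PsiRel_rec (htr : ∀ x y z, lt x y → lt y z → lt x z) (hirr : ∀ x, ¬ lt x x)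
    (b t : β) (hbt : lt b t) :
    PsiRel ℤ lt rk b t = ev ℤ ^ (rk t - rk b - 1) + ∑ z, if lt b z ∧ lt z t then
      ev ℤ ^ (rk z - rk b - 1) * bv ℤ * PsiRel ℤ lt rk z t else 0 := by
  have hne : ∀ x y, lt x y → x ≠ y := fun x y h e => hirr x (by rw [← e] at h; exact h)
  rw [PsiRel_eq_sum hirr (Fintype.card β + 2) (by omega), Finset.sum_range_succ',
    Finset.sum_range_succ', NCh_zero _ _ (hne _ _ hbt), add_zero, NCh_one, if_pos hbt, add_comm]
  congr 1
  simp only [NCh_succ htr]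
  rw [Finset.sum_comm]
  refine Finset.sum_congr rfl fun z _ => ?_
  split_ifs with hz
  · rw [← Finset.mul_sum, PsiRel_eq_sum hirr (Fintype.card β + 1) (by omega),
      Finset.sum_range_succ', NCh_zero _ _ (hne _ _ hz.2), add_zero]
  · simp

end Chains

/-! ### Helper lemmas: posets -/

section Posets

variable {α : Type} [Fintype α] [PartialOrder α] (rk : α → ℕ)

open Classical in
/-- `(a-b)^{ρ(x,y)-1}` for `x < y`, and `0` otherwise. -/
def EE (x y : α) : AB ℤ := if x < y then ev ℤ ^ (rk y - rk x - 1) else 0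

open Classical in
/-- `Ψ([x,y])` for `x < y`, and `0` otherwise. -/
def PP (x y : α) : AB ℤ := if x < y then PsiRel ℤ (· < ·) rk x y else 0

theorem PP_rec (x y : α) : PP rk x y = EE rk x y + ∑ z, EE rk x z * bv ℤ * PP rk z y := by
  classical
  by_cases h : x < y
  · rw [PP, EE, if_pos h, if_pos h, PsiRel_rec (lt := (· < ·)) (fun _ _ _ => lt_trans)
      (fun x => lt_irrefl x) x y h]
    congr 1
    refine Finset.sum_congr rfl fun z _ => ?_
    rw [EE, PP]
    by_cases h1 : x < z <;> by_cases h2 : z < y <;> simp [h1, h2]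
  · rw [PP, EE, if_neg h, if_neg h, zero_add, eq_comm]
    refine Finset.sum_eq_zero fun z _ => ?_
    rw [EE, PP]
    by_cases h1 : x < z
    · have h2 : ¬ z < y := fun h2 => h (h1.trans h2)
      simp [h2]
    · simp [h1]

theorem Delta_EE_mul (x y : α) (u : AB ℤ) : Delta ℤ (EE rk x y * bv ℤ * u) =
    EE rk x y ⊗ₜ[ℤ] u + ((EE rk x y * bv ℤ) ⊗ₜ[ℤ] (1 : AB ℤ)) * Delta ℤ u := by
  classical
  rw [EE]
  split_ifs
  · exact Delta_ev_pow_mul _ _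
  · simp

theorem Delta_PP (x y : α) : Delta ℤ (PP rk x y) = ∑ z, PP rk x z ⊗ₜ[ℤ] PP rk z y := by
  classical
  induction x using WellFoundedGT.induction with
  | ind x ih =>
  have hE : Delta ℤ (EE rk x y) = 0 := by
    rw [EE]; split_ifs
    · exact Delta_ev_pow _
    · simp
  have h1 : ∀ z, Delta ℤ (EE rk x z * bv ℤ * PP rk z y) = EE rk x z ⊗ₜ[ℤ] PP rk z y +
      ∑ z', (EE rk x z * bv ℤ * PP rk z z') ⊗ₜ[ℤ] PP rk z' y := by
    intro z
    by_cases h : x < z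
    · rw [Delta_EE_mul, ih z h, Finset.mul_sum]
      simp only [Algebra.TensorProduct.tmul_mul_tmul, one_mul]
    · have h0 : EE rk x z = 0 := if_neg h
      simp [h0]
  rw [PP_rec, map_add, hE, zero_add, map_sum]
  simp only [h1]
  rw [Finset.sum_add_distrib, Finset.sum_comm, ← Finset.sum_add_distrib]
  refine Finset.sum_congr rfl fun z _ => ?_
  rw [← TensorProduct.sum_tmul, ← TensorProduct.add_tmul, ← PP_rec]

theorem kappa_PP (x y : α) : kappa ℤ (PP rk x y) = EE rk x y := by
  rw [PP_rec, map_add, map_sum, Finset.sum_eq_zero, add_zero]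
  · rw [EE]; split_ifs
    · exact kappa_ev_pow _
    · simp
  · intro z _
    rw [kappa_mul, kappa_mul, kappa_bv]; simp

variable {rk}

theorem rk_lt [OrderBot α] (hrk : IsRankFun α rk) {x y : α} (h : x < y) : rk x < rk y := by
  classical
  let _ : LocallyFiniteOrder α := Fintype.toLocallyFiniteOrder
  have := transGen_covBy_of_lt h
  induction this with
  | single hc => rw [hrk.2 _ _ hc]; omega
  | tail h1 h2 ih =>
    have := ih (lt_iff_transGen_covBy.2 h1)
    rw [hrk.2 _ _ h2]; omega

open Classical in
theorem nu_PP [OrderBot α] (hrk : IsRankFun α rk) (x y : α) : nuMap ℤ (PP rk x y) =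
    (2 + (Finset.univ.filter fun z => x < z ∧ z < y).card) • EE rk x y := by
  rw [nuMap_eq, kappa_PP, Delta_PP, map_sum]
  have h : ∀ z, nuAux (PP rk x z ⊗ₜ[ℤ] PP rk z y) =
      if x < z ∧ z < y then EE rk x y else 0 := by
    intro z
    rw [nuAux_tmul, kappa_PP, kappa_PP]
    by_cases h1 : x < z
    · by_cases h2 : z < y
      · have a1 := rk_lt hrk h1
        have a2 := rk_lt hrk h2
        rw [if_pos ⟨h1, h2⟩, EE, EE, EE, if_pos h1, if_pos h2, if_pos (h1.trans h2), ← pow_succ,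
          ← pow_add]
        congr 1; omega
      · simp [EE, h2]
    · simp [EE, h1]
  simp only [h]
  rw [← Finset.sum_filter, Finset.sum_const, add_smul]
  congr 1

end Posets

section Main

variable {α : Type} [Fintype α] [PartialOrder α] [BoundedOrder α] (rk : α → ℕ)

open Classical in
/-- The ab-index of `[z, 2̂]` in `P ∪ {2̂}`. -/
def Phi (z : α) : AB ℤ := (if z = ⊤ then 1 else 0) + PP rk z ⊤ * av ℤ

theorem Delta_Phi (x : α) : Delta ℤ (Phi rk x) = ∑ y, PP rk x y ⊗ₜ[ℤ] Phi rk y := by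
  classical
  have h : Delta ℤ (if x = ⊤ then (1 : AB ℤ) else 0) = 0 := by
    split_ifs
    · exact Delta_one
    · simp
  rw [Phi, map_add, h, zero_add, Delta_mul_av, Delta_PP, Finset.sum_mul]
  simp only [Phi, TensorProduct.tmul_add, Finset.sum_add_distrib,
    Algebra.TensorProduct.tmul_mul_tmul, mul_one]
  rw [add_comm]
  congr 1
  rw [Finset.sum_eq_single ⊤]
  · simp
  · intro b _ hb; simp [hb]
  · simp

variable {rk}

theorem T_Phi (hrk : IsRankFun α rk) (x : α) : Tmap ℤ (Phi rk x) =
    ev ℤ ^ (rk ⊤ - rk x) + ∑ y, nuMap ℤ (PP rk x y) * bv ℤ * Tmap ℤ (Phi rk y) := by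
  classical
  rw [Tmap_eq, Delta_Phi, map_sum]
  simp only [tAux_tmul]
  congr 1
  rw [Phi, map_add, kappa_mul, kappa_av, kappa_PP, EE]
  by_cases h : x = ⊤
  · subst h; simp [kappa_one]
  · have h' : x < ⊤ := lt_top_iff_ne_top.2 h
    have := rk_lt hrk h'
    rw [if_neg h, if_pos h', map_zero, zero_add, ← pow_succ]
    congr 1; omega

/-! #### The order of `T(P)` -/

theorem TPlt_none (q : TP α) : ¬ TPlt α none q := by
  intro h
  rcases Relation.TransGen.head'_iff.1 h with ⟨c, hc, -⟩
  cases hc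

theorem TPle_same {w : WithBot α} {x y : α} (hx : w < (x : WithBot α)) (hy : w < (y : WithBot α))
    (h : x ≤ y) : Relation.ReflTransGen (TPcov α) (some ⟨(w, x), hx⟩) (some ⟨(w, y), hy⟩) := by
  classical
  let _ : LocallyFiniteOrder α := Fintype.toLocallyFiniteOrder
  have := le_iff_reflTransGen_covBy.1 h
  induction this with
  | refl => exact .refl
  | @tail b c h1 h2 ih =>
    have hxb : x ≤ b := le_iff_reflTransGen_covBy.2 h1
    have hb : w < (b : WithBot α) := lt_of_lt_of_le hx (WithBot.coe_le_coe.2 hxb)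
    exact (ih hb hxb).tail (TPcov.same hb hy h2)

theorem TPlt_top (p : TPel α) : TPlt α (some p) none := by
  obtain ⟨⟨w, x⟩, hx⟩ := p
  have ht : w < ((⊤ : α) : WithBot α) := lt_of_lt_of_le hx (WithBot.coe_le_coe.2 le_top)
  exact Relation.TransGen.tail' (TPle_same hx ht le_top) (TPcov.top ht)

theorem TPlt_some (p q : TPel α) : TPlt α (some p) (some q) ↔
    p.1.2 < q.1.2 ∧ (p.1.1 = q.1.1 ∨ (p.1.2 : WithBot α) ≤ q.1.1) := by
  classical
  let _ : LocallyFiniteOrder α := Fintype.toLocallyFiniteOrder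
  constructor
  · intro h
    have key : ∀ r : TP α, TPlt α (some p) r → ∀ q, r = some q →
        p.1.2 < q.1.2 ∧ (p.1.1 = q.1.1 ∨ (p.1.2 : WithBot α) ≤ q.1.1) := by
      intro r hr
      induction hr with
      | single h =>
        intro q hq
        subst hq
        cases h with
        | up h1 h2 hc => exact ⟨hc.lt, Or.inr le_rfl⟩
        | same h1 h2 hc => exact ⟨hc.lt, Or.inl rfl⟩
      | tail h1 h2 ih =>
        intro q hq
        subst hq
        cases h2 with
        | up h1 h2 hc =>
          have := (ih _ rfl).1
          exact ⟨this.trans hc.lt, Or.inr (WithBot.coe_le_coe.2 this.le)⟩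
        | same h1 h2 hc =>
          have := ih _ rfl
          exact ⟨this.1.trans hc.lt, this.2⟩
    exact key _ h q rfl
  · obtain ⟨⟨w, x⟩, hx⟩ := p
    obtain ⟨⟨w', x'⟩, hx'⟩ := q
    rintro ⟨h, rfl | h2⟩
    · have hle := TPle_same hx hx' (le_of_lt h)
      rcases Relation.reflTransGen_iff_eq_or_transGen.1 hle with h3 | h3
      · exfalso
        have h4 := Option.some.inj h3
        have h5 := congrArg (fun p : TPel α => p.1.2) h4
        exact h.ne h5.symm
      · exact h3
    · dsimp only at h2 h hx'
      induction w' using WithBot.recBotCoe with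
      | bot => simp at h2
      | coe y =>
        have hxy : x ≤ y := WithBot.coe_le_coe.1 h2
        have hyx' : y < x' := WithBot.coe_lt_coe.1 hx'
        obtain ⟨y', hc, hy'⟩ := exists_covBy_le_of_lt hyx'
        have hwy : w < (y : WithBot α) := lt_of_lt_of_le hx h2
        have hyy' : (y : WithBot α) < (y' : WithBot α) := WithBot.coe_lt_coe.2 hc.lt
        exact Relation.TransGen.trans_left
          (Relation.TransGen.tail' (TPle_same hx hwy hxy) (TPcov.up hwy hyy' hc))
          (TPle_same hyy' hx' hy')

theorem TPlt_irrefl (p : TP α) : ¬ TPlt α p p := by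
  cases p with
  | none => exact TPlt_none _
  | some p => intro h; exact lt_irrefl _ ((TPlt_some p p).1 h).1

noncomputable instance : Fintype (TPel α) := by
  classical
  haveI : Finite (WithBot α) := inferInstanceAs (Finite (Option α))
  haveI : Finite (TPel α) :=
    inferInstanceAs (Finite {p : WithBot α × α // p.1 < (p.2 : WithBot α)})
  exact Fintype.ofFinite _

noncomputable instance : Fintype (TP α) := inferInstanceAs (Fintype (Option (TPel α)))

open Classical in
theorem card_fiber (p : TPel α) (y : α) (h : p.1.2 < y) :
    (Finset.univ.filter fun q : TPel α => TPlt α (some p) (some q) ∧ q.1.2 = y).card =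
      2 + (Finset.univ.filter fun z => p.1.2 < z ∧ z < y).card := by
  obtain ⟨⟨w, x⟩, hx⟩ := p
  dsimp only at h ⊢
  have hwy : w < (y : WithBot α) := hx.trans (WithBot.coe_lt_coe.2 h)
  have hinj : Function.Injective (fun q : TPel α => q.1) := Subtype.val_injective
  rw [← Finset.card_image_of_injective _ hinj]
  have : Finset.image (fun q : TPel α => q.1)
      (Finset.univ.filter fun q : TPel α => TPlt α (some ⟨(w, x), hx⟩) (some q) ∧ q.1.2 = y) =
      insert (w, y) (insert ((x : WithBot α), y) (Finset.image (fun z : α => ((z : WithBot α), y))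
        (Finset.univ.filter fun z => x < z ∧ z < y))) := by
    ext ⟨w', y'⟩
    simp only [Finset.mem_image, Finset.mem_filter, Finset.mem_univ, true_and, Finset.mem_insert,
      Prod.mk.injEq]
    constructor
    · rintro ⟨⟨⟨w1, y1⟩, hq⟩, ⟨h0, rfl⟩, he⟩
      obtain ⟨h1, h2⟩ := (TPlt_some _ _).1 h0
      obtain ⟨rfl, rfl⟩ := Prod.mk.inj he
      dsimp only at h1 h2 hq
      rcases h2 with rfl | h2
      · exact Or.inl ⟨rfl, rfl⟩
      · right
        induction w1 using WithBot.recBotCoe with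
        | bot => simp at h2
        | coe z =>
          rcases (WithBot.coe_le_coe.1 h2).eq_or_lt with rfl | h3
          · exact Or.inl ⟨rfl, rfl⟩
          · exact Or.inr ⟨z, ⟨h3, WithBot.coe_lt_coe.1 hq⟩, rfl, rfl⟩
    · rintro (⟨rfl, rfl⟩ | ⟨rfl, rfl⟩ | ⟨z, ⟨h1, h2⟩, rfl, rfl⟩)
      · exact ⟨⟨(w', y'), hwy⟩, ⟨(TPlt_some _ _).2 ⟨h, Or.inl rfl⟩, rfl⟩, rfl⟩
      · exact ⟨⟨((x : WithBot α), y'), WithBot.coe_lt_coe.2 h⟩,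
          ⟨(TPlt_some _ _).2 ⟨h, Or.inr le_rfl⟩, rfl⟩, rfl⟩
      · exact ⟨⟨((z : WithBot α), y), WithBot.coe_lt_coe.2 h2⟩,
          ⟨(TPlt_some _ _).2 ⟨h, Or.inr (WithBot.coe_le_coe.2 h1.le)⟩, rfl⟩, rfl⟩
  rw [this, Finset.card_insert_of_notMem, Finset.card_insert_of_notMem,
    Finset.card_image_of_injective]
  · omega
  · intro z z' hz
    simpa using hz
  · simp
  · simp only [Finset.mem_insert, Finset.mem_image, Finset.mem_filter, Finset.mem_univ, true_and,
      Prod.mk.injEq, and_true, not_or, not_exists, not_and]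
    refine ⟨hx.ne, fun z hz e => ?_⟩
    rw [← e] at hx
    exact lt_asymm hz.1 (WithBot.coe_lt_coe.1 hx)

theorem Psi_TP (hrk : IsRankFun α rk) (n : ℕ) : ∀ p : TPel α, rk ⊤ - rk p.1.2 = n →
    PsiRel ℤ (TPlt α) (TPrk α rk) (some p) none = Tmap ℤ (Phi rk p.1.2) := by
  classical
  induction n using Nat.strong_induction_on with
  | _ n ih =>
  intro p hp
  rw [PsiRel_rec (lt := TPlt α) (fun _ _ _ => Relation.TransGen.trans) TPlt_irrefl _ _ (TPlt_top p),
    T_Phi hrk]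
  have hsum : ∀ F : TP α → AB ℤ, ∑ z : TP α, F z = F none + ∑ q : TPel α, F (some q) :=
    fun F => Fintype.sum_option F
  rw [hsum, if_neg (fun h => TPlt_none _ h.2), zero_add]
  refine congrArg₂ (· + ·) ?_ ?_
  · simp only [TPrk]
    congr 1
    omega
  · have h1 : ∀ q : TPel α, (if TPlt α (some p) (some q) ∧ TPlt α (some q) none then
        ev ℤ ^ (TPrk α rk (some q) - TPrk α rk (some p) - 1) * bv ℤ *
          PsiRel ℤ (TPlt α) (TPrk α rk) (some q) none else 0) =
        ∑ y, if TPlt α (some p) (some q) ∧ q.1.2 = y then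
          EE rk p.1.2 y * bv ℤ * Tmap ℤ (Phi rk y) else 0 := by
      intro q
      by_cases h : TPlt α (some p) (some q)
      · have hlt := ((TPlt_some p q).1 h).1
        have hr := rk_lt hrk hlt
        have hr2 : rk q.1.2 ≤ rk ⊤ := by
          rcases (le_top (a := q.1.2)).eq_or_lt with h | h
          · rw [h]
          · exact (rk_lt hrk h).le
        rw [if_pos ⟨h, TPlt_top q⟩, ih (rk ⊤ - rk q.1.2) (by omega) q rfl]
        simp [h, EE, hlt, TPrk]
      · simp [h]
    simp only [h1]
    rw [Finset.sum_comm]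
    refine Finset.sum_congr rfl fun y _ => ?_
    rw [← Finset.sum_filter, Finset.sum_const, nu_PP hrk]
    by_cases h : p.1.2 < y
    · rw [card_fiber p y h, smul_mul_assoc, smul_mul_assoc]
    · have : EE rk p.1.2 y = 0 := if_neg h
      simp [this]

end Main

theorem abindex_tchebyshev_transform
    (α : Type) [Fintype α] [PartialOrder α] [BoundedOrder α]
    (rk : α → ℕ) (hrk : IsRankFun α rk) (h1 : 1 ≤ rk (⊤ : α)) :
    PsiRel ℤ (TPlt α) (TPrk α rk) (TPbot α) (TPtop α) =
      Tmap ℤ (PsiRel ℤ (· < ·) rk (⊥ : α) (⊤ : α) * av ℤ) := by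
  have hbt : (⊥ : α) < ⊤ := by
    refine bot_le.lt_of_ne fun h => ?_
    rw [← h, hrk.1] at h1
    omega
  have h := Psi_TP hrk _ ⟨((⊥ : WithBot α), (⊥ : α)), WithBot.bot_lt_coe _⟩ rfl
  rw [TPbot, TPtop, h]
  simp [Phi, PP, hbt, hbt.ne]

end Tcheb
end
end

section
/- For every n ≥ 1, the ab-index of the Tchebyshev transform of the Boolean algebra B_n equals the ab-index of the face lattice of the n-dimensional crosspolytope: Ψ(T(B_n)) = Ψ(C_n). -/
open scoped TensorProduct

noncomputable section

namespace Tcheb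

section Aux

theorem isStrictChain_iff {α : Type} {lt : α → α → Prop} (htr : ∀ a b c, lt a b → lt b c → lt a c)
    {k : ℕ} (f : Fin (k + 1) → α) :
    IsStrictChain lt f ↔ ∀ i : Fin k, lt (f i.castSucc) (f i.succ) := by
  constructor
  · intro h i
    exact h _ _ i.castSucc_lt_succ
  · intro h i j hij
    induction j using Fin.induction with
    | zero => exact absurd hij (Fin.not_lt_zero i)
    | succ j ih =>
      rcases (Fin.le_castSucc_iff.2 hij).lt_or_eq with h1 | h1
      · exact htr _ _ _ (ih h1) (h j)
      · rw [h1]; exact h j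

open Classical in
/-- Sum of a function of the image chain over all chains of length `k` starting at `u`. -/
def chainSum {α β M : Type} [Fintype α] [AddCommMonoid M] (lt : α → α → Prop) (z : α → β)
    (k : ℕ) (u : α) (F : (Fin (k + 1) → β) → M) : M :=
  ∑ f : Fin (k + 1) → α, if f 0 = u ∧ ∀ i : Fin k, lt (f i.castSucc) (f i.succ)
    then F (fun i => z (f i)) else 0

open Classical in
theorem chainSum_zero {α β M : Type} [Fintype α] [AddCommMonoid M] (lt : α → α → Prop) (z : α → β)
    (u : α) (F : (Fin 1 → β) → M) : chainSum lt z 0 u F = F (fun _ => z u) := by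
  unfold chainSum
  rw [Finset.sum_eq_single (fun _ => u)]
  · simp
  · intro f _ hf
    rw [if_neg]
    rintro ⟨h, -⟩
    apply hf
    funext i
    rw [show i = 0 from Fin.eq_zero i, h]
  · simp

open Classical in
theorem chainSum_succ {α β M : Type} [Fintype α] [AddCommMonoid M] (lt : α → α → Prop) (z : α → β)
    (k : ℕ) (u : α) (F : (Fin (k + 2) → β) → M) :
    chainSum lt z (k + 1) u F =
      ∑ v : {v // lt u v}, chainSum lt z k v.1 (fun g => F (Fin.cons (z u) g)) := by
  have h1 : ∀ (a : α) (f : Fin (k + 1) → α),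
      (fun i => z ((Fin.cons a f : Fin (k + 2) → α) i)) =
        (Fin.cons (z a) (fun i => z (f i)) : Fin (k + 2) → β) := by
    intro a f; funext i
    induction i using Fin.cases <;> simp
  unfold chainSum
  rw [← (Fin.consEquiv (fun _ : Fin (k + 2) => α)).sum_comp, Fintype.sum_prod_type,
    Finset.sum_eq_single u]
  · rw [Finset.sum_comm]
    refine Finset.sum_congr rfl fun f _ => ?_
    have h2 : (∀ i : Fin (k+1), lt ((Fin.cons u f : Fin (k + 2) → α) i.castSucc)
        ((Fin.cons u f : Fin (k + 2) → α) i.succ)) ↔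
        lt u (f 0) ∧ ∀ i : Fin k, lt (f i.castSucc) (f i.succ) := by
      rw [Fin.forall_fin_succ]
      simp
    simp only [Fin.consEquiv_apply, h1, h2, Fin.cons_zero, true_and]
    by_cases h0 : lt u (f 0)
    · rw [Finset.sum_eq_single ⟨f 0, h0⟩]
      · simp [h0]
      · intro b _ hb
        rw [if_neg]
        rintro ⟨h, -⟩
        exact hb (Subtype.ext h.symm)
      · simp
    · rw [if_neg (by tauto), Finset.sum_eq_zero]
      intro b _
      rw [if_neg]
      rintro ⟨h, -⟩
      exact h0 (h ▸ b.2)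
  · intro a _ ha
    refine Finset.sum_eq_zero fun f _ => ?_
    rw [if_neg]
    rintro ⟨h, -⟩
    exact ha (by simpa using h)
  · simp

theorem chainSum_eq {α α' β M : Type} [Fintype α] [Fintype α'] [AddCommMonoid M]
    (lt : α → α → Prop) (lt' : α' → α' → Prop) (z : α → β) (z' : α' → β)
    (H : ∀ u u', z u = z' u' → ∃ e : {v // lt u v} ≃ {v // lt' u' v}, ∀ v, z' (e v).1 = z v.1)
    (k : ℕ) : ∀ (u : α) (u' : α') (F : (Fin (k + 1) → β) → M), z u = z' u' →
      chainSum lt z k u F = chainSum lt' z' k u' F := by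
  classical
  induction k with
  | zero => intro u u' F h; rw [chainSum_zero, chainSum_zero, h]
  | succ k ih =>
    intro u u' F h
    rw [chainSum_succ, chainSum_succ]
    obtain ⟨e, he⟩ := H u u' h
    refine Fintype.sum_equiv e _ _ fun v => ?_
    rw [h]
    exact ih _ _ _ (he v).symm

open Classical in
theorem PsiRel_eq_chainSum {α β : Type} [Fintype α] (lt : α → α → Prop)
    (htr : ∀ a b c, lt a b → lt b c → lt a c) (z : α → β) (rk : α → ℕ) (r : β → ℕ)
    (hr : ∀ a, rk a = r (z a)) (b t : α) (T : β) (hT : ∀ a, z a = T ↔ a = t) :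
    PsiRel ℤ lt rk b t = ∑ᶠ k : ℕ, chainSum lt z k b
      (fun g => if g (Fin.last k) = T then chainWt ℤ r g else 0) := by
  unfold PsiRel
  refine finsum_congr fun k => ?_
  rw [finsum_eq_sum_of_fintype]
  unfold chainSum
  refine Finset.sum_congr rfl fun f _ => ?_
  rw [finsum_eq_if, isStrictChain_iff htr]
  simp only [hT]
  have : chainWt ℤ rk f = chainWt ℤ r (fun i => z (f i)) := by
    simp only [chainWt, hr]
  rw [this, ← ite_and]
  have hiff : ((∀ i : Fin k, lt (f i.castSucc) (f i.succ)) ∧ f 0 = b ∧ f (Fin.last k) = t) ↔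
      ((f 0 = b ∧ ∀ i : Fin k, lt (f i.castSucc) (f i.succ)) ∧ f (Fin.last k) = t) := by tauto
  by_cases hc : (f 0 = b ∧ ∀ i : Fin k, lt (f i.castSucc) (f i.succ)) ∧ f (Fin.last k) = t
  · rw [if_pos hc, if_pos (hiff.2 hc)]
  · rw [if_neg hc, if_neg (mt hiff.1 hc)]

theorem PsiRel_eq_of {α α' β : Type} [Fintype α] [Fintype α']
    (lt : α → α → Prop) (lt' : α' → α' → Prop)
    (htr : ∀ a b c, lt a b → lt b c → lt a c) (htr' : ∀ a b c, lt' a b → lt' b c → lt' a c)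
    (z : α → β) (z' : α' → β) (rk : α → ℕ) (rk' : α' → ℕ) (r : β → ℕ)
    (hr : ∀ a, rk a = r (z a)) (hr' : ∀ a, rk' a = r (z' a))
    (b t : α) (b' t' : α') (T : β) (hT : ∀ a, z a = T ↔ a = t) (hT' : ∀ a, z' a = T ↔ a = t')
    (hb : z b = z' b')
    (H : ∀ u u' w, z u = z' u' →
      Nonempty ({v // lt u v ∧ z v = w} ≃ {v // lt' u' v ∧ z' v = w})) :
    PsiRel ℤ lt rk b t = PsiRel ℤ lt' rk' b' t' := by
  rw [PsiRel_eq_chainSum lt htr z rk r hr b t T hT,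
    PsiRel_eq_chainSum lt' htr' z' rk' r hr' b' t' T hT']
  refine finsum_congr fun k => chainSum_eq lt lt' z z' ?_ k _ _ _ hb
  intro u u' h
  have e := fun w => Classical.choice (H u u' w h)
  refine ⟨⟨fun v => ⟨(e (z v.1) ⟨v.1, v.2, rfl⟩).1, (e (z v.1) ⟨v.1, v.2, rfl⟩).2.1⟩,
    fun v => ⟨((e (z' v.1)).symm ⟨v.1, v.2, rfl⟩).1, ((e (z' v.1)).symm ⟨v.1, v.2, rfl⟩).2.1⟩,
    ?_, ?_⟩, ?_⟩
  · rintro ⟨v, hv⟩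
    have key : ∀ w (x : {v // lt' u' v ∧ z' v = w}), ((e (z' x.1)).symm ⟨x.1, x.2.1, rfl⟩).1 = 
        ((e w).symm x).1 := by
      rintro w ⟨x, hx, rfl⟩; rfl
    apply Subtype.ext
    simp only
    rw [key, Equiv.symm_apply_apply]
  · rintro ⟨v, hv⟩
    have key : ∀ w (x : {v // lt u v ∧ z v = w}), ((e (z x.1)) ⟨x.1, x.2.1, rfl⟩).1 = 
        ((e w) x).1 := by
      rintro w ⟨x, hx, rfl⟩; rfl
    apply Subtype.ext
    simp only
    rw [key, Equiv.apply_symm_apply]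
  · intro v
    exact (e (z v.1) ⟨v.1, v.2, rfl⟩).2.2

variable {α : Type} [PartialOrder α] [BoundedOrder α]

/-- Explicit description of the order of `T(P)`. -/
def TPrel : TP α → TP α → Prop
  | some p, some q => p.1.2 < q.1.2 ∧ (q.1.1 = p.1.1 ∨ (p.1.2 : WithBot α) ≤ q.1.1)
  | some _, none => True
  | none, _ => False

theorem TPrel_of_TPlt {u v : TP α} (h : TPlt α u v) : TPrel u v := by
  induction h with
  | single h => 
    cases h with
    | up h1 h2 hc => exact ⟨hc.lt, Or.inr le_rfl⟩
    | same h1 h2 hc => exact ⟨hc.lt, Or.inl rfl⟩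
    | top h1 => trivial
  | tail _ h ih =>
    cases h with
    | @up x y w h1 h2 hc =>
      cases u with
      | none => exact ih
      | some p => exact ⟨ih.1.trans hc.lt, Or.inr (WithBot.coe_le_coe.2 ih.1.le)⟩
    | @same x y w h1 h2 hc =>
      cases u with
      | none => exact ih
      | some p => exact ⟨ih.1.trans hc.lt, ih.2⟩
    | top h1 =>
      cases u with
      | none => exact ih
      | some p => trivial

theorem TPlt_same {x : WithBot α} {y w : α} (h1 : x < (y : WithBot α)) (h2 : x < (w : WithBot α))
    (h : Relation.TransGen (· ⋖ ·) y w) : TPlt α (some ⟨(x, y), h1⟩) (some ⟨(x, w), h2⟩) := by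
  induction h with
  | single h => exact .single (.same h1 h2 h)
  | @tail b c hb h ih =>
    have hlt : y < b := by
      clear ih h
      induction hb with
      | single h => exact h.lt
      | tail _ h ih => exact ih.trans h.lt
    have hb' := h1.trans (WithBot.coe_lt_coe.2 hlt)
    exact .tail (ih hb') (.same hb' h2 h)

theorem TPlt_up {x : WithBot α} {y w : α} (h1 : x < (y : WithBot α))
    (h2 : (y : WithBot α) < (w : WithBot α))
    (h : Relation.TransGen (· ⋖ ·) y w) :
    TPlt α (some ⟨(x, y), h1⟩) (some ⟨((y : WithBot α), w), h2⟩) := by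
  obtain ⟨c, hc, hcw⟩ := Relation.TransGen.head'_iff.1 h
  have hyc : (y : WithBot α) < (c : WithBot α) := WithBot.coe_lt_coe.2 hc.lt
  have hs : TPcov α (some ⟨(x, y), h1⟩) (some ⟨((y : WithBot α), c), hyc⟩) := .up h1 hyc hc
  rcases Relation.reflTransGen_iff_eq_or_transGen.1 hcw with h3 | h3
  · subst h3; exact .single hs
  · exact .head hs (TPlt_same hyc h2 h3)

theorem TPlt_iff [LocallyFiniteOrder α] {u v : TP α} : TPlt α u v ↔ TPrel u v := by
  refine ⟨TPrel_of_TPlt, fun h => ?_⟩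
  match u, v, h with
  | some ⟨(x, y), h1⟩, none, _ =>
    rcases (le_top : y ≤ ⊤).eq_or_lt with h | h
    · subst h; exact .single (.top h1)
    · exact .tail (TPlt_same h1 (lt_trans (show x < (y : WithBot α) from h1)
        (WithBot.coe_lt_coe.2 h)) (transGen_covBy_of_lt h)) (.top _)
  | some ⟨(x, y), h1⟩, some ⟨(x', y'), h2⟩, h =>
    obtain ⟨h3, h4⟩ := h
    simp only at h3 h4 h1 h2
    rcases h4 with h4 | h4
    · subst h4
      exact TPlt_same h1 h2 (transGen_covBy_of_lt h3)
    · cases x' with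
      | bot => simp at h4
      | coe x' =>
        have h5 : y ≤ x' := WithBot.coe_le_coe.1 h4
        have h6 : x' < y' := WithBot.coe_lt_coe.1 h2
        rcases h5.eq_or_lt with h | h
        · subst h
          exact TPlt_up h1 h2 (transGen_covBy_of_lt h6)
        · exact Relation.TransGen.trans
            (TPlt_same h1 (h1.trans (WithBot.coe_lt_coe.2 h)) (transGen_covBy_of_lt h))
            (TPlt_up _ h2 (transGen_covBy_of_lt h6))

/-- The support map on the crosspolytope. -/
def crossZ (n : ℕ) : Cross n → WithTop (Finset (Fin n))
  | none => ⊤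
  | some f => ((Finset.univ.filter fun i : Fin n => (f i).isSome : Finset (Fin n)) :
      WithTop (Finset (Fin n)))

/-- Fiber of `T(B_n)`. -/
theorem fiberT {n : ℕ} (x : WithBot (Finset (Fin n))) (y w : Finset (Fin n))
    (h1 : x < (y : WithBot _)) (hyw : y < w) :
    Nonempty ({s // s ∈ Set.Icc y w} ≃ {v // TPlt (Finset (Fin n)) (some ⟨(x, y), h1⟩) v ∧
      zmap (Finset (Fin n)) v = (w : WithTop _)}) := by
  classical
  have hxw : x < (w : WithBot _) := h1.trans (WithBot.coe_lt_coe.2 hyw)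
  let φ : {s // s ∈ Set.Icc y w} → {v // TPlt (Finset (Fin n)) (some ⟨(x, y), h1⟩) v ∧
      zmap (Finset (Fin n)) v = (w : WithTop _)} := fun s =>
    if h : s.1 = w then ⟨some ⟨(x, w), hxw⟩, TPlt_iff.2 ⟨hyw, Or.inl rfl⟩, rfl⟩
    else ⟨some ⟨((s.1 : WithBot _), w), WithBot.coe_lt_coe.2 (lt_of_le_of_ne s.2.2 h)⟩,
      TPlt_iff.2 ⟨hyw, Or.inr (WithBot.coe_le_coe.2 s.2.1)⟩, rfl⟩
  refine ⟨Equiv.ofBijective φ ⟨?_, ?_⟩⟩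
  · rintro ⟨s, hs⟩ ⟨s', hs'⟩ h
    apply Subtype.ext
    have hns : ∀ s, s ∈ Set.Icc y w → x ≠ (s : WithBot _) := by
      rintro s hs rfl
      exact absurd (WithBot.coe_lt_coe.1 h1) (not_lt_of_ge hs.1)
    have h' := congrArg Subtype.val h
    simp only [φ] at h'
    split_ifs at h' with a b b
    · exact a.trans b.symm
    · have h2 := congrArg (fun p : TPel (Finset (Fin n)) => p.1.1) (Option.some.inj h')
      exact absurd h2 (hns _ hs')
    · have h2 := congrArg (fun p : TPel (Finset (Fin n)) => p.1.1) (Option.some.inj h')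
      exact absurd h2.symm (hns _ hs)
    · have h2 := congrArg (fun p : TPel (Finset (Fin n)) => p.1.1) (Option.some.inj h')
      exact WithBot.coe_injective h2
  · rintro ⟨v, hv, hz⟩
    match v, hv, hz with
    | none, _, hz => exact absurd hz (WithTop.top_ne_coe)
    | some ⟨(x', y'), h2⟩, hv, hz =>
      have hz' : y' = w := WithTop.coe_injective hz
      subst hz'
      obtain ⟨_, h4⟩ := TPlt_iff.1 hv
      simp only at h4 h2
      rcases h4 with h4 | h4
      · subst h4
        refine ⟨⟨y', hyw.le, le_rfl⟩, ?_⟩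
        simp [φ]
      · cases x' with
        | bot => simp at h4
        | coe x' =>
          have h6 : x' < y' := WithBot.coe_lt_coe.1 h2
          refine ⟨⟨x', WithBot.coe_le_coe.1 h4, h6.le⟩, ?_⟩
          simp [φ, h6.ne]

/-- Fiber of the crosspolytope. -/
theorem fiberC {n : ℕ} (f : CrossEl n) (y w : Finset (Fin n))
    (hf : (Finset.univ.filter fun i : Fin n => (f i).isSome) = y) (hyw : y < w) :
    Nonempty ({s // s ∈ Set.Icc y w} ≃ {v : Cross n // (f : Cross n) < v ∧
      crossZ n v = (w : WithTop _)}) := by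
  classical
  have hfy : ∀ i, (f i).isSome ↔ i ∈ y := by intro i; rw [← hf]; simp
  let g : Finset (Fin n) → CrossEl n := fun s i => 
    if i ∈ y then f i else if i ∈ w then some (decide (i ∈ s)) else none
  have hg : ∀ s, (Finset.univ.filter fun i : Fin n => (g s i).isSome) = w := by
    intro s
    ext i
    have := hfy i
    have hyi : i ∈ y → i ∈ w := fun h => hyw.le h
    simp only [g, Finset.mem_filter, Finset.mem_univ, true_and]
    split_ifs <;> simp_all
  have hle : ∀ s, f ≤ g s := by
    intro s i b hb
    have : i ∈ y := (hfy i).1 (by simp [hb])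
    simp [g, this, hb]
  have hlt : ∀ s, f < g s := by
    intro s
    refine lt_of_le_of_ne (hle s) ?_
    intro h
    have := hg s
    rw [← h, hf] at this
    exact hyw.ne this
  refine ⟨Equiv.ofBijective (fun s => ⟨(g s.1 : Cross n), WithTop.coe_lt_coe.2 (hlt _),
    congrArg WithTop.some (hg s.1)⟩) ⟨?_, ?_⟩⟩
  · rintro ⟨s, hs⟩ ⟨s', hs'⟩ h
    apply Subtype.ext
    have h2 : g s = g s' := WithTop.coe_injective (congrArg Subtype.val h)
    ext i
    have h3 := congrFun h2 i
    simp only [g] at h3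
    by_cases hy : i ∈ y
    · exact ⟨fun _ => hs'.1 hy, fun _ => hs.1 hy⟩
    · by_cases hw : i ∈ w
      · simpa [hy, hw] using h3
      · exact ⟨fun h => absurd (hs.2 h) hw, fun h => absurd (hs'.2 h) hw⟩
  · rintro ⟨v, hv, hz⟩
    cases v using WithTop.recTopCoe with
    | top => exact absurd hz (WithTop.top_ne_coe)
    | coe v =>
      have hvw : (Finset.univ.filter fun i : Fin n => (v i).isSome) = w :=
        WithTop.coe_injective hz
      have hvw' : ∀ i, (v i).isSome ↔ i ∈ w := by intro i; rw [← hvw]; simp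
      have hfv : f ≤ v := (WithTop.coe_lt_coe.1 hv).le
      refine ⟨⟨w.filter (fun i => i ∈ y ∨ v i = some true), ?_, Finset.filter_subset _ _⟩, ?_⟩
      · intro i hi
        simp [hyw.le hi, hi]
      · apply Subtype.ext
        apply congrArg WithTop.some
        funext i
        simp only [g]
        split_ifs with a b
        · obtain ⟨c, hc⟩ := Option.isSome_iff_exists.1 ((hfy i).2 a)
          rw [hc, hfv i c hc]
        · obtain ⟨c, hc⟩ := Option.isSome_iff_exists.1 ((hvw' i).2 b)
          cases c <;> simp [hc, a, b]
        · have := mt (hvw' i).1 b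
          have h9 : v i = none := by simpa using this
          exact h9.symm

theorem fiber_equiv (n : ℕ) (u : TP (Finset (Fin n))) (u' : Cross n)
    (w : WithTop (Finset (Fin n))) (h : zmap (Finset (Fin n)) u = crossZ n u') :
    Nonempty ({v // TPlt (Finset (Fin n)) u v ∧ zmap (Finset (Fin n)) v = w} ≃
      {v // u' < v ∧ crossZ n v = w}) := by
  match u, u', h with
  | none, none, _ =>
    have : IsEmpty {v // TPlt (Finset (Fin n)) none v ∧ zmap (Finset (Fin n)) v = w} :=
      ⟨fun v => TPlt_iff.1 v.2.1⟩
    have : IsEmpty {v : Cross n // (⊤ : Cross n) < v ∧ crossZ n v = w} :=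
      ⟨fun v => not_top_lt v.2.1⟩
    exact ⟨Equiv.equivOfIsEmpty _ _⟩
  | none, some f, h => exact absurd h WithTop.top_ne_coe
  | some p, none, h => exact absurd h WithTop.coe_ne_top
  | some ⟨(x, y), h1⟩, some f, h =>
    have hf : (Finset.univ.filter fun i : Fin n => (f i).isSome) = y :=
      (WithTop.coe_injective h).symm
    simp only at h1
    cases w with
    | top =>
      refine ⟨⟨fun _ => ⟨⊤, WithTop.coe_lt_top _, rfl⟩,
        fun _ => ⟨none, TPlt_iff.2 trivial, rfl⟩, ?_, ?_⟩⟩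
      · rintro ⟨v, hv, hz⟩
        match v, hv, hz with
        | none, _, _ => rfl
        | some p, _, hz => exact absurd hz WithTop.coe_ne_top
      · rintro ⟨v, hv, hz⟩
        match v, hv, hz with
        | none, _, _ => rfl
        | some p, _, hz => exact absurd hz WithTop.coe_ne_top
    | coe w =>
      by_cases hyw : y < w
      · obtain ⟨e1⟩ := fiberT x y w h1 hyw
        obtain ⟨e2⟩ := fiberC f y w hf hyw
        exact ⟨e1.symm.trans e2⟩
      · have : IsEmpty {v // TPlt (Finset (Fin n)) (some ⟨(x, y), h1⟩) v ∧
            zmap (Finset (Fin n)) v = (w : WithTop _)} := by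
          refine ⟨?_⟩
          rintro ⟨v, hv, hz⟩
          match v, hv, hz with
          | none, _, hz => exact absurd hz WithTop.top_ne_coe
          | some p, hv, hz =>
            apply hyw
            rw [← WithTop.coe_injective hz]
            exact (TPlt_iff.1 hv).1
        have hE : IsEmpty {v : Cross n // (f : Cross n) < v ∧ crossZ n v = (w : WithTop _)} := by
          refine ⟨?_⟩
          rintro ⟨v, hv, hz⟩
          cases v using WithTop.recTopCoe with
          | top => exact absurd hz WithTop.top_ne_coe
          | coe v =>
            apply hyw
            have hvw : (Finset.univ.filter fun i : Fin n => (v i).isSome) = w :=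
              WithTop.coe_injective hz
            have hlt : f < v := WithTop.coe_lt_coe.1 hv
            refine lt_of_le_of_ne ?_ ?_
            · intro i hi
              rw [← hf] at hi
              obtain ⟨c, hc⟩ := Option.isSome_iff_exists.1 (Finset.mem_filter.1 hi).2
              rw [← hvw]
              simp [hlt.le i c hc]
            · intro hy
              apply hlt.ne
              funext i
              cases hfi : f i with
              | some c => exact (hlt.le i c hfi).symm
              | none =>
                have h3 : i ∉ y := by rw [← hf]; simp [hfi]
                rw [hy, ← hvw] at h3
                have h9 : v i = none := by simpa using h3
                exact h9.symm
        exact ⟨@Equiv.equivOfIsEmpty _ _ _ hE⟩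

end Aux

theorem tchebyshev_boolean_eq_crosspolytope (n : ℕ) (hn : 1 ≤ n) :
    PsiRel ℤ (TPlt (Finset (Fin n))) (TPrk (Finset (Fin n)) fun s => s.card)
        (TPbot (Finset (Fin n))) (TPtop (Finset (Fin n))) =
      PsiRel ℤ (· < ·) (crossRk n) (crossBot n) (crossTop n) := by
  classical
  have : Finite (TP (Finset (Fin n))) := by
    unfold TP TPel
    infer_instance
  have : Finite (Cross n) := by
    unfold Cross CrossEl
    exact inferInstanceAs (Finite (Option (Fin n → Option Bool)))
  have := Fintype.ofFinite (TP (Finset (Fin n)))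
  have := Fintype.ofFinite (Cross n)
  refine PsiRel_eq_of (β := WithTop (Finset (Fin n))) (TPlt (Finset (Fin n)))
    (fun a b : Cross n => a < b)
    (fun _ _ _ h h' => Relation.TransGen.trans h h')
    (fun _ _ _ h h' => lt_trans h h') (zmap (Finset (Fin n))) (crossZ n) _ _
    (fun b => match b with
      | none => n + 1
      | some s => s.card) ?_ ?_ _ _ _ _ ⊤ ?_ ?_ ?_ (fun u u' w h => fiber_equiv n u u' w h)
  · rintro (_ | a)
    · simp [TPrk, zmap]
    · rfl
  · rintro (_ | a) <;> rfl
  · rintro (_ | a)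
    · exact iff_of_true rfl rfl
    · exact iff_of_false WithTop.coe_ne_top (Option.some_ne_none _)
  · rintro (_ | a)
    · exact iff_of_true rfl rfl
    · exact iff_of_false WithTop.coe_ne_top (Option.some_ne_none _)
  · simp [zmap, TPbot, crossZ, crossBot]

end Tcheb
end
end

section
/- The Tchebyshev transform T on ab-polynomials and the linear map σ(u) = Σ_u κ(u_(1))·b·T(u_(2)) satisfy the joint recursion: T(1) = 1; T(a·u) = (a+b)·T(u) + (a−b)·σ(u); T(b·u) = 2b·T(u) + (a−b)·σ(u); σ(1) = 0; σ(a·u) = b·T(u) + (a−b)·σ(u); and σ(b·u) = b·T(u), for all u ∈ ℤ⟨a,b⟩. -/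
open scoped TensorProduct

noncomputable section

namespace Tcheb

section Aux

variable (R : Type) [CommRing R]

theorem aux_sum_succ {M : Type} [AddCommMonoid M] (n : ℕ) (g : List ℕ → M) :
    ∑ S : Finset (Fin (n + 1)), g ((S.sort (· ≤ ·)).map Fin.val) =
      ∑ S : Finset (Fin n), g (((S.sort (· ≤ ·)).map Fin.val).map (· + 1)) +
      ∑ S : Finset (Fin n), g (0 :: ((S.sort (· ≤ ·)).map Fin.val).map (· + 1)) := by
  have hsort : ∀ S : Finset (Fin n), ((S.map (Fin.succEmb n)).sort (· ≤ ·)).map Fin.val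
      = ((S.sort (· ≤ ·)).map Fin.val).map (· + 1) := by
    intro S
    have h := Finset.map_sort (r := (· ≤ ·)) (r' := (· ≤ ·)) (Fin.succEmb n) S
      (by intro a _ b _; simp)
    rw [← h]
    simp [Function.comp_def]
  have hnot : ∀ S : Finset (Fin n), (0 : Fin (n+1)) ∉ S.map (Fin.succEmb n) := by
    intro S; simp [Fin.succ_ne_zero]
  have hsort0 : ∀ S : Finset (Fin n),
      (((S.map (Fin.succEmb n)).cons 0 (hnot S)).sort (· ≤ ·)).map Fin.val
      = 0 :: ((S.sort (· ≤ ·)).map Fin.val).map (· + 1) := by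
    intro S
    rw [Finset.sort_cons (· ≤ ·) (by intro b _; exact Fin.zero_le b) (hnot S), List.map_cons, hsort]
    rfl
  refine Eq.trans ?_ (Fintype.sum_sum_type (fun x : Finset (Fin n) ⊕ Finset (Fin n) => Sum.elim
      (fun S => g (((S.sort (· ≤ ·)).map Fin.val).map (· + 1)))
      (fun S => g (0 :: ((S.sort (· ≤ ·)).map Fin.val).map (· + 1))) x))
  symm
  refine Fintype.sum_bijective (Sum.elim (fun S => S.map (Fin.succEmb n))
    (fun S => (S.map (Fin.succEmb n)).cons 0 (hnot S))) ⟨?_, ?_⟩ _ _ ?_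
  · rintro (S | S) (T | T) h
    · simp only [Sum.elim_inl] at h
      rw [Finset.map_injective _ h]
    · simp only [Sum.elim_inl, Sum.elim_inr] at h
      exact absurd (h ▸ Finset.mem_cons_self _ _) (hnot S)
    · simp only [Sum.elim_inl, Sum.elim_inr] at h
      exact absurd (h ▸ Finset.mem_cons_self _ _) (hnot T)
    · simp only [Sum.elim_inr, Finset.cons_eq_insert] at h
      have h2 := congrArg (fun X => Finset.erase X 0) h
      simp only [Finset.erase_insert (hnot _)] at h2
      rw [Finset.map_injective _ h2]
  · intro S
    by_cases h0 : (0 : Fin (n+1)) ∈ S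
    · refine ⟨Sum.inr (Finset.univ.filter fun i => i.succ ∈ S), ?_⟩
      ext x
      refine Fin.cases ?_ (fun i => ?_) x
      · simp [h0]
      · simp [Fin.succ_ne_zero]
    · refine ⟨Sum.inl (Finset.univ.filter fun i => i.succ ∈ S), ?_⟩
      ext x
      refine Fin.cases ?_ (fun i => ?_) x
      · simp [h0, Fin.succ_ne_zero]
      · simp
  · rintro (S | S)
    · simp only [Sum.elim_inl, hsort]
    · simp only [Sum.elim_inr, hsort0]

/-- Prepend a prefix to the first segment. -/
def auxPre (p : List Bool) : List (List Bool) → List (List Bool)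
  | [] => []
  | s :: rest => (p ++ s) :: rest

theorem aux_segments_ne (w : List Bool) (l : List ℕ) : segments w l ≠ [] := by
  cases l <;> simp [segments]

theorem aux_segments_succ (p : List Bool) (x : Bool) (w : List Bool) (l : List ℕ) :
    auxPre p (segments (x :: w) (l.map (· + 1))) = auxPre (p ++ [x]) (segments w l) := by
  cases l with
  | nil => simp [segments, auxPre]
  | cons i rest =>
    simp [segments, auxPre, Function.comp_def]

theorem aux_segments_zero (p : List Bool) (x : Bool) (w : List Bool) (l : List ℕ) :
    auxPre p (segments (x :: w) (0 :: l.map (· + 1))) = p :: segments w l := by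
  simp [segments, auxPre, Function.comp_def]

theorem aux_chainProd_cons (s : List Bool) (l : List (List Bool)) (h : l ≠ []) :
    chainProd R (s :: l) = nuMap R (word R s) * bv R * chainProd R l := by
  cases l with
  | nil => exact absurd rfl h
  | cons a l => rw [chainProd]; simp

theorem aux_onBasis {M : Type} [AddCommMonoid M] [Module R M] (f : List Bool → M)
    (w : List Bool) : onBasis R f (word R w) = f w := by
  simp [onBasis, word]

theorem aux_T_word (w : List Bool) : Tmap R (word R w) = ∑ S : Finset (Fin w.length),
    chainProd R (segments w ((S.sort (· ≤ ·)).map Fin.val)) := by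
  rw [Tmap, aux_onBasis]

theorem aux_T_gen (w : List Bool) : ∀ p : List Bool,
    ∑ S : Finset (Fin w.length),
      chainProd R (auxPre p (segments w ((S.sort (· ≤ ·)).map Fin.val))) =
    kappa R (word R (p ++ w)) + ∑ i ∈ Finset.range w.length,
      nuMap R (word R (p ++ w.take i)) * bv R * Tmap R (word R (w.drop (i + 1))) := by
  induction w with
  | nil =>
    intro p
    have : (Finset.univ : Finset (Finset (Fin ([] : List Bool).length))) = {∅} := by rfl
    rw [this]
    simp [segments, auxPre, chainProd]
  | cons x w ih =>
    intro p
    have h := aux_sum_succ w.length (fun l => chainProd R (auxPre p (segments (x :: w) l)))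
    rw [List.length_cons, h]
    simp only [aux_segments_succ, aux_segments_zero]
    rw [ih, Finset.sum_range_succ']
    simp only [aux_chainProd_cons R _ _ (aux_segments_ne _ _), ← Finset.mul_sum, ← aux_T_word]
    simp [add_assoc]

theorem aux_T_rec (w : List Bool) :
    Tmap R (word R w) = kappa R (word R w) + ∑ i ∈ Finset.range w.length,
      nuMap R (word R (w.take i)) * bv R * Tmap R (word R (w.drop (i + 1))) := by
  have h := aux_T_gen R w []
  have h2 : ∀ l, auxPre [] l = l := by intro l; cases l <;> rfl
  simp only [h2, List.nil_append, ← aux_T_word] at h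
  exact h

theorem aux_sigma_word (w : List Bool) :
    sigmaMap R (word R w) = ∑ i ∈ Finset.range w.length,
      kappa R (word R (w.take i)) * bv R * Tmap R (word R (w.drop (i + 1))) := by
  simp [sigmaMap, Delta, aux_onBasis]

theorem aux_word_cons (x : Bool) (w : List Bool) : word R (x :: w) = word R [x] * word R w := by
  rw [word, word, word, ← map_mul]; rfl

theorem aux_A_cons (x : Bool) (w : List Bool) :
    Amap R (word R (x :: w)) = (if x then 1 else 0) * Amap R (word R w) := by
  rw [aux_word_cons, map_mul]
  congr 1
  simp [Amap, word]

theorem aux_word_nil : word R [] = 1 := by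
  rw [word]; exact map_one _

theorem aux_C_word (w : List Bool) : Cmap R (word R w) = 2 * Amap R (word R w) +
    ∑ i ∈ Finset.range w.length,
      Amap R (word R (w.take i)) * Amap R (word R (w.drop (i + 1))) := by
  simp [Cmap, Delta, aux_onBasis]

theorem aux_C_nil : Cmap R (word R []) = 2 := by
  rw [aux_C_word]; simp [aux_word_nil]

theorem aux_C_true (w : List Bool) :
    Cmap R (word R (true :: w)) = Cmap R (word R w) + Amap R (word R w) := by
  rw [aux_C_word, aux_C_word, List.length_cons, Finset.sum_range_succ']
  simp [aux_A_cons, aux_word_nil]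
  ring

theorem aux_C_false (w : List Bool) :
    Cmap R (word R (false :: w)) = Amap R (word R w) := by
  rw [aux_C_word, List.length_cons, Finset.sum_range_succ']
  simp [aux_A_cons, aux_word_nil]

theorem aux_k_nil : kappa R (word R []) = 1 := by
  rw [kappa, aux_onBasis]; simp [aux_word_nil]

theorem aux_k_true (w : List Bool) :
    kappa R (word R (true :: w)) = ev R * kappa R (word R w) := by
  simp [kappa, aux_onBasis, aux_A_cons, pow_succ']

theorem aux_k_false (w : List Bool) : kappa R (word R (false :: w)) = 0 := by
  simp [kappa, aux_onBasis, aux_A_cons]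

theorem aux_nu_nil : nuMap R (word R []) = 2 := by
  rw [nuMap, aux_onBasis, aux_C_nil, List.length_nil, pow_zero, two_smul]
  exact one_add_one_eq_two

theorem aux_nu_true (w : List Bool) : nuMap R (word R (true :: w)) =
    ev R * (nuMap R (word R w) + kappa R (word R w)) := by
  simp [kappa, nuMap, aux_onBasis, aux_C_true, pow_succ', mul_add, add_smul]

theorem aux_nu_false (w : List Bool) : nuMap R (word R (false :: w)) =
    ev R * kappa R (word R w) := by
  simp [kappa, nuMap, aux_onBasis, aux_C_false, pow_succ']

theorem aux_T_true (w : List Bool) : Tmap R (av R * word R w) =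
    (av R + bv R) * Tmap R (word R w) + (av R - bv R) * sigmaMap R (word R w) := by
  rw [av, ← aux_word_cons, aux_T_rec R (true :: w), List.length_cons, Finset.sum_range_succ']
  simp only [List.take_succ_cons, List.drop_succ_cons, List.take_zero, List.drop_zero,
    aux_nu_nil, aux_nu_true, aux_k_true, mul_add, add_mul, Finset.sum_add_distrib]
  rw [aux_sigma_word]
  have h := congrArg (fun t => ev R * t) (aux_T_rec R w)
  simp only [mul_add, Finset.mul_sum, mul_assoc] at h ⊢
  have h3 : word R [true] * Tmap R (word R w) =
      ev R * Tmap R (word R w) + bv R * Tmap R (word R w) := by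
    rw [ev, av]; noncomm_ring
  rw [h3, h]
  have h4 : word R [true] - bv R = ev R := rfl
  rw [h4]
  noncomm_ring

theorem aux_T_false (w : List Bool) : Tmap R (bv R * word R w) =
    2 * bv R * Tmap R (word R w) + (av R - bv R) * sigmaMap R (word R w) := by
  nth_rewrite 1 [bv]
  rw [← aux_word_cons, aux_T_rec R (false :: w), List.length_cons, Finset.sum_range_succ']
  simp only [List.take_succ_cons, List.drop_succ_cons, List.take_zero, List.drop_zero,
    aux_nu_nil, aux_nu_false, aux_k_false]
  rw [aux_sigma_word, Finset.mul_sum, zero_add, add_comm]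
  simp only [mul_assoc, ev]

theorem aux_s_true (w : List Bool) : sigmaMap R (av R * word R w) =
    bv R * Tmap R (word R w) + (av R - bv R) * sigmaMap R (word R w) := by
  nth_rewrite 1 [av]
  rw [← aux_word_cons, aux_sigma_word R (true :: w), List.length_cons, Finset.sum_range_succ']
  simp only [List.take_succ_cons, List.drop_succ_cons, List.take_zero, List.drop_zero,
    aux_k_nil, aux_k_true]
  rw [aux_sigma_word, Finset.mul_sum, add_comm]
  simp only [mul_assoc, ev, one_mul]

theorem aux_s_false (w : List Bool) : sigmaMap R (bv R * word R w) =
    bv R * Tmap R (word R w) := by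
  nth_rewrite 1 [bv]
  rw [← aux_word_cons, aux_sigma_word R (false :: w), List.length_cons, Finset.sum_range_succ']
  simp [aux_k_nil, aux_k_false]

theorem aux_ext {f g : AB R →ₗ[R] AB R} (h : ∀ w, f (word R w) = g (word R w)) (u : AB R) :
    f u = g u := by
  induction u using MonoidAlgebra.induction_on with
  | of w => exact h (FreeMonoid.toList w)
  | add x y hx hy => rw [map_add, map_add, hx, hy]
  | smul r x hx => rw [map_smul, map_smul, hx]

end Aux

theorem tchebyshev_sigma_recursion :
    Tmap ℤ 1 = 1 ∧ sigmaMap ℤ 1 = 0 ∧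
    ∀ u : AB ℤ,
      Tmap ℤ (av ℤ * u)
          = (av ℤ + bv ℤ) * Tmap ℤ u + (av ℤ - bv ℤ) * sigmaMap ℤ u ∧
      Tmap ℤ (bv ℤ * u)
          = 2 * bv ℤ * Tmap ℤ u + (av ℤ - bv ℤ) * sigmaMap ℤ u ∧
      sigmaMap ℤ (av ℤ * u)
          = bv ℤ * Tmap ℤ u + (av ℤ - bv ℤ) * sigmaMap ℤ u ∧
      sigmaMap ℤ (bv ℤ * u) = bv ℤ * Tmap ℤ u := by
  refine ⟨?_, ?_, fun u => ⟨?_, ?_, ?_, ?_⟩⟩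
  · rw [← aux_word_nil, aux_T_rec, aux_k_nil]
    simp [aux_word_nil]
  · rw [← aux_word_nil, aux_sigma_word]
    simp
  · exact aux_ext ℤ (f := Tmap ℤ ∘ₗ LinearMap.mulLeft ℤ (av ℤ))
      (g := LinearMap.mulLeft ℤ (av ℤ + bv ℤ) ∘ₗ Tmap ℤ +
        LinearMap.mulLeft ℤ (av ℤ - bv ℤ) ∘ₗ sigmaMap ℤ) (fun w => aux_T_true ℤ w) u
  · exact aux_ext ℤ (f := Tmap ℤ ∘ₗ LinearMap.mulLeft ℤ (bv ℤ))
      (g := LinearMap.mulLeft ℤ (2 * bv ℤ) ∘ₗ Tmap ℤ +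
        LinearMap.mulLeft ℤ (av ℤ - bv ℤ) ∘ₗ sigmaMap ℤ) (fun w => aux_T_false ℤ w) u
  · exact aux_ext ℤ (f := sigmaMap ℤ ∘ₗ LinearMap.mulLeft ℤ (av ℤ))
      (g := LinearMap.mulLeft ℤ (bv ℤ) ∘ₗ Tmap ℤ +
        LinearMap.mulLeft ℤ (av ℤ - bv ℤ) ∘ₗ sigmaMap ℤ) (fun w => aux_s_true ℤ w) u
  · exact aux_ext ℤ (f := sigmaMap ℤ ∘ₗ LinearMap.mulLeft ℤ (bv ℤ))
      (g := LinearMap.mulLeft ℤ (bv ℤ) ∘ₗ Tmap ℤ) (fun w => aux_s_false ℤ w) u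

end Tcheb
end
end
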